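/- arXiv:1710.07973 — 2 statements merged into one kernel-verified Lean document; each statement's English description precedes it below -/
import Mathlib

section
/- Let n ≥ 2 and 1 ≤ k ≤ n be integers, let μ be the standard Gaussian measure on ℝ^n, and let x ∈ Σ_k with ‖x‖₂ = 1. Let d := ⌊2k·lg(ne)⌋, α := inf over θ ∈ (0, 2π) of (2/π)·θ/(1 − cos θ), and let ε, δ ∈ (0,1) and m ≥ max{ (8d/ε)·lg(8e/ε), (4/ε)·lg(2/δ) }. Draw a_1, …, a_m independently from μ. Then with μ^m-outer measure at least 1 − δ, every unit-norm k-sparse vector x̂ ∈ Σ_k satisfying (⟨a_i, x̂⟩ ≥ 0 if and only if ⟨a_i, x⟩ ≥ 0) for all i = 1, …, m also satisfies ‖x̂ − x‖₂² ≤ (4/α)·ε. -/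
open Real MeasureTheory

noncomputable section

/-- A vector `x : ℝ^n` is `k`-sparse if it has at most `k` nonzero components. -/
def sparse (n k : ℕ) (x : Fin n → ℝ) : Prop :=
  ∃ s : Finset (Fin n), s.card ≤ k ∧ ∀ i ∉ s, x i = 0

/-!
If a consistent unit vector `v` lies at squared distance more than `4 / α * ε` from `x`, then no
measurement vector falls into the set where `⟪a, x⟫` and `⟪a, v⟫` have opposite signs. By rotation
invariance this double wedge has Gaussian measure `angle x v / π`, and the definition of `α`
bounds `‖v - x‖ ^ 2` by `4 / α` times that, so the wedge has measure at least `ε`. It therefore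
suffices that a random sample hits every wedge of measure at least `ε`, which is the `ε`-net
argument of Vapnik–Chervonenkis and Haussler–Welzl: if the sample misses a wedge, an independent
second sample still hits it about `ε * m` times with probability at least `1 / 2`, and randomly
exchanging the `i`-th points of the two samples makes this unlikely for each of the possible traces
of a wedge on the double sample. For fixed `x` and a fixed support of size `k`, the function
`⟪a, x⟫ * ⟪a, v⟫` is linear in `v`, so its negativity sets have Vapnik–Chervonenkis dimension at
most `k`; hence there are at most `n ^ k * (2 * m + 1) ^ k` traces in all.
-/

open ProbabilityTheory InnerProductGeometry
open scoped Finset RealInnerProductSpace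

section Traces

variable {X κ : Type*} [Fintype κ]

open Classical in
/-- The traces of a set family `𝓕` on a tuple of points `c`: the index sets `{i | c i ∈ A}` for
`A ∈ 𝓕`. The growth function of `𝓕` at `N` is the largest number of traces on `N` points. -/
def traces (𝓕 : Set (Set X)) (c : κ → X) : Finset (Finset κ) :=
  {T | ∃ A ∈ 𝓕, ∀ i, i ∈ T ↔ c i ∈ A}

lemma mem_traces {𝓕 : Set (Set X)} {c : κ → X} {T : Finset κ} :
    T ∈ traces 𝓕 c ↔ ∃ A ∈ 𝓕, ∀ i, i ∈ T ↔ c i ∈ A := by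
  simp only [traces, Finset.mem_filter_univ]

lemma traces_mono {𝓕 𝓖 : Set (Set X)} (h : 𝓕 ⊆ 𝓖) (c : κ → X) : traces 𝓕 c ⊆ traces 𝓖 c := by
  intro T hT
  obtain ⟨A, hA, hTA⟩ := mem_traces.1 hT
  exact mem_traces.2 ⟨A, h hA, hTA⟩

lemma card_traces_biUnion_le {ι : Type*} (s : Finset ι) (𝓕 : ι → Set (Set X)) (c : κ → X) :
    #(traces (⋃ i ∈ s, 𝓕 i) c) ≤ ∑ i ∈ s, #(traces (𝓕 i) c) := by
  classical
  refine (Finset.card_le_card fun T hT ↦ ?_).trans Finset.card_biUnion_le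
  obtain ⟨A, hA, hTA⟩ := mem_traces.1 hT
  obtain ⟨i, hi, hAi⟩ := Set.mem_iUnion₂.1 hA
  exact Finset.mem_biUnion.2 ⟨i, hi, mem_traces.2 ⟨A, hAi, hTA⟩⟩

lemma sum_choose_le_pow (N D : ℕ) : ∑ i ∈ Finset.Iic D, N.choose i ≤ (N + 1) ^ D := by
  rw [← Nat.range_succ_eq_Iic, add_pow]
  refine Finset.sum_le_sum fun i hi ↦ ?_
  rw [one_pow, mul_one]
  exact (Nat.choose_le_pow N i).trans
    (Nat.le_mul_of_pos_right _ (Nat.choose_pos (Finset.mem_range_succ_iff.1 hi)))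

lemma card_le_pow_of_shatters_card_le [DecidableEq κ] {𝒜 : Finset (Finset κ)} {D : ℕ}
    (h : ∀ t, 𝒜.Shatters t → #t ≤ D) : #𝒜 ≤ (Fintype.card κ + 1) ^ D :=
  calc #𝒜 ≤ #𝒜.shatterer := 𝒜.card_le_card_shatterer
    _ ≤ ∑ i ∈ Finset.Iic 𝒜.vcDim, (Fintype.card κ).choose i := Finset.card_shatterer_le_sum_vcDim
    _ ≤ (Fintype.card κ + 1) ^ 𝒜.vcDim := sum_choose_le_pow _ _
    _ ≤ (Fintype.card κ + 1) ^ D := by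
      gcongr
      · omega
      · exact Finset.sup_le fun t ht ↦ h t (Finset.mem_shatterer.1 ht)

variable {𝕜 E : Type*} [Field 𝕜] [LinearOrder 𝕜] [IsStrictOrderedRing 𝕜] [AddCommGroup E]
  [Module 𝕜 E] [FiniteDimensional 𝕜 E]

lemma exists_sum_mul_eq_zero_of_finrank_lt_card (Φ : E →ₗ[𝕜] κ → 𝕜)
    (h : Module.finrank 𝕜 E < Fintype.card κ) :
    ∃ g : κ → 𝕜, (∃ i, 0 < g i) ∧ ∀ v, ∑ i, g i * Φ v i = 0 := by
  classical
  have hlt : LinearMap.range Φ < ⊤ := by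
    refine Submodule.lt_top_of_finrank_lt_finrank ?_
    rw [Module.finrank_fintype_fun_eq_card]
    exact Φ.finrank_range_le.trans_lt h
  obtain ⟨f, hf, hΦf⟩ := (LinearMap.range Φ).exists_le_ker_of_lt_top hlt
  obtain ⟨g, rfl⟩ := (dotProductEquiv 𝕜 κ).surjective f
  have hzero (v : E) : ∑ i, g i * Φ v i = 0 := hΦf ⟨v, rfl⟩
  obtain ⟨i, hi⟩ := Function.ne_iff.1 ((dotProductEquiv 𝕜 κ).map_ne_zero_iff.1 hf)
  rcases hi.lt_or_gt with hneg | hpos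
  · refine ⟨-g, ⟨i, neg_pos.2 hneg⟩, fun v ↦ ?_⟩
    simp only [Pi.neg_apply, neg_mul, Finset.sum_neg_distrib, hzero, neg_zero]
  · exact ⟨g, ⟨i, hpos⟩, hzero⟩

lemma card_le_finrank_of_shatters_traces_negSets [DecidableEq κ] (Φ : E →ₗ[𝕜] X → 𝕜) (c : κ → X)
    {t : Finset κ} (ht : (traces (Set.range fun v ↦ {a | Φ v a < 0}) c).Shatters t) :
    #t ≤ Module.finrank 𝕜 E := by
  by_contra! hlt
  obtain ⟨g, ⟨i₀, hi₀⟩, hg⟩ := exists_sum_mul_eq_zero_of_finrank_lt_card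
    ((LinearMap.funLeft 𝕜 𝕜 fun i : t ↦ c i) ∘ₗ Φ) (by rwa [Fintype.card_coe])
  -- A function in the class that is negative exactly where `g` is positive has negative
  -- `g`-weighted sum.
  obtain ⟨T, hT, htT⟩ := ht (t := ({i | 0 < g i} : Finset t).map (.subtype _))
    (Finset.map_subtype_subset _)
  obtain ⟨_, ⟨v, rfl⟩, hv⟩ := mem_traces.1 hT
  have hsign (i : t) : Φ v (c i) < 0 ↔ 0 < g i := by
    have : (i : κ) ∈ t ∩ T ↔ 0 < g i := by simp [htT]
    simpa [hv] using this
  refine (Finset.sum_neg' (fun i _ ↦ ?_) ⟨i₀, Finset.mem_univ _, ?_⟩).ne (hg v)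
  · rcases lt_or_ge 0 (g i) with h | h
    · exact (mul_neg_of_pos_of_neg h ((hsign i).2 h)).le
    · exact mul_nonpos_of_nonpos_of_nonneg h (not_lt.1 (mt (hsign i).1 h.not_gt))
  · exact mul_neg_of_pos_of_neg hi₀ ((hsign i₀).2 hi₀)

theorem card_traces_negSets_le (Φ : E →ₗ[𝕜] X → 𝕜) (c : κ → X) :
    #(traces (Set.range fun v ↦ {a | Φ v a < 0}) c) ≤
      (Fintype.card κ + 1) ^ Module.finrank 𝕜 E := by
  classical
  exact card_le_pow_of_shatters_card_le fun t ↦ card_le_finrank_of_shatters_traces_negSets Φ c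

end Traces

section Symmetrization

variable {X ι : Type*}

/-- The samples `a` that avoid some member of the family `𝓕` altogether. -/
def missEvent (ι : Type*) (𝓕 : Set (Set X)) : Set (ι → X) :=
  {a | ∃ A ∈ 𝓕, ∀ i, a i ∉ A}

open Classical in
/-- The double samples `c` whose first half avoids some member of `𝓕` that the second half (the
ghost sample) hits at least `r` times. -/
def ghostEvent (ι : Type*) [Fintype ι] (𝓕 : Set (Set X)) (r : ℕ) : Set (ι ⊕ ι → X) :=
  {c | ∃ A ∈ 𝓕, (∀ i, c (.inl i) ∉ A) ∧ r ≤ #{i | c (.inr i) ∈ A}}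

/-- The permutation of the indices of a double sample that exchanges the two copies of each
`i ∈ σ`. -/
def swapOn [DecidableEq ι] (σ : Finset ι) : Equiv.Perm (ι ⊕ ι) :=
  Function.Involutive.toPerm (fun p ↦ if p.elim id id ∈ σ then p.swap else p) <| by
    rintro (i | i) <;> by_cases h : i ∈ σ <;> simp [h]

lemma swapOn_inl [DecidableEq ι] (σ : Finset ι) (i : ι) :
    swapOn σ (.inl i) = if i ∈ σ then .inr i else .inl i := rfl

lemma swapOn_inr [DecidableEq ι] (σ : Finset ι) (i : ι) :
    swapOn σ (.inr i) = if i ∈ σ then .inl i else .inr i := rfl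

variable [Fintype ι]

lemma two_pow_mul_card_swapOn_le [DecidableEq ι] (r : ℕ) (T : Finset (ι ⊕ ι)) :
    2 ^ r * #{σ | (∀ i, swapOn σ (.inl i) ∉ T) ∧ r ≤ #{i | swapOn σ (.inr i) ∈ T}} ≤
      2 ^ Fintype.card ι := by
  set S : Finset (Finset ι) := {σ | (∀ i, swapOn σ (.inl i) ∉ T) ∧
    r ≤ #{i | swapOn σ (.inr i) ∈ T}}
  -- Whether such a `σ` contains `i` is forced as soon as `T` contains a copy of `i`.
  have hIcc : S ⊆ Finset.Icc T.toLeft T.toRightᶜ := by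
    intro σ hσ
    have hT := (Finset.mem_filter.1 hσ).2.1
    simp only [swapOn_inl] at hT
    refine Finset.mem_Icc.2 ⟨fun i hi ↦ ?_, fun i hi ↦ Finset.mem_compl.2 fun hiT ↦ ?_⟩
    · by_contra hiσ
      exact hT i (by simpa [hiσ] using hi)
    · exact hT i (by simpa [hi] using hiT)
  rcases S.eq_empty_or_nonempty with hempty | ⟨σ, hσ⟩
  · simp [hempty]
  have hle : T.toLeft ⊆ T.toRightᶜ :=
    (Finset.mem_Icc.1 (hIcc hσ)).1.trans (Finset.mem_Icc.1 (hIcc hσ)).2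
  have hr : r ≤ #T.toLeft + #T.toRight := by
    refine (Finset.mem_filter.1 hσ).2.2.trans <|
      (Finset.card_le_card fun i hi ↦ ?_).trans (Finset.card_union_le _ _)
    rw [Finset.mem_filter_univ, swapOn_inr] at hi
    split_ifs at hi
    · exact Finset.mem_union_left _ (Finset.mem_toLeft.2 hi)
    · exact Finset.mem_union_right _ (Finset.mem_toRight.2 hi)
  calc 2 ^ r * #S ≤ 2 ^ r * 2 ^ (#T.toRightᶜ - #T.toLeft) := by
        grw [hIcc, Finset.card_Icc_finset hle]
    _ ≤ 2 ^ Fintype.card ι := by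
        rw [← pow_add]
        refine Nat.pow_le_pow_right two_pos ?_
        have := Finset.card_le_card hle
        have := T.toRight.card_compl_add_card
        omega

lemma two_pow_mul_card_comp_swapOn_mem_ghostEvent_le [DecidableEq ι] (𝓕 : Set (Set X)) (r : ℕ)
    (c : ι ⊕ ι → X) [DecidablePred fun σ : Finset ι ↦ c ∘ swapOn σ ∈ ghostEvent ι 𝓕 r] :
    2 ^ r * #{σ | c ∘ swapOn σ ∈ ghostEvent ι 𝓕 r} ≤ #(traces 𝓕 c) * 2 ^ Fintype.card ι := by
  classical
  have hsub : ({σ | c ∘ swapOn σ ∈ ghostEvent ι 𝓕 r} : Finset (Finset ι)) ⊆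
      (traces 𝓕 c).biUnion fun T ↦
        {σ | (∀ i, swapOn σ (.inl i) ∉ T) ∧ r ≤ #{i | swapOn σ (.inr i) ∈ T}} := by
    intro σ hσ
    obtain ⟨A, hA, hmiss, hhit⟩ := (Finset.mem_filter.1 hσ).2
    refine Finset.mem_biUnion.2 ⟨({p | c p ∈ A} : Finset (ι ⊕ ι)), ?_, ?_⟩
    · exact mem_traces.2 ⟨A, hA, fun i ↦ Finset.mem_filter_univ i⟩
    · simp only [Finset.mem_filter_univ]
      exact ⟨hmiss, hhit.trans_eq (by congr)⟩
  calc 2 ^ r * #{σ | c ∘ swapOn σ ∈ ghostEvent ι 𝓕 r}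
    _ ≤ 2 ^ r * ∑ T ∈ traces 𝓕 c,
          #{σ | (∀ i, swapOn σ (.inl i) ∉ T) ∧ r ≤ #{i | swapOn σ (.inr i) ∈ T}} := by
        gcongr
        exact (Finset.card_le_card hsub).trans Finset.card_biUnion_le
    _ ≤ ∑ T ∈ traces 𝓕 c, 2 ^ Fintype.card ι := by
        rw [Finset.mul_sum]
        exact Finset.sum_le_sum fun T _ ↦ two_pow_mul_card_swapOn_le r T
    _ = #(traces 𝓕 c) * 2 ^ Fintype.card ι := by rw [Finset.sum_const, smul_eq_mul]

variable [MeasurableSpace X] (P : Measure X) [IsProbabilityMeasure P]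

lemma measurePreserving_comp_perm (e : Equiv.Perm ι) :
    MeasurePreserving (fun c : ι → X ↦ c ∘ e) (.pi fun _ ↦ P) (.pi fun _ ↦ P) :=
  (measurePreserving_piCongrLeft (fun _ : ι ↦ P) e).symm

lemma two_pow_mul_measure_ghostEvent_le {𝓕 : Set (Set X)} {r G : ℕ}
    (hmeas : MeasurableSet (ghostEvent ι 𝓕 r)) (hG : ∀ c : ι ⊕ ι → X, #(traces 𝓕 c) ≤ G) :
    2 ^ r * Measure.pi (fun _ : ι ⊕ ι ↦ P) (ghostEvent ι 𝓕 r) ≤ G := by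
  classical
  set ν : Measure (ι ⊕ ι → X) := .pi fun _ ↦ P
  have hswap (σ : Finset ι) : ∫⁻ c, (ghostEvent ι 𝓕 r).indicator 1 (c ∘ swapOn σ) ∂ν =
      ν (ghostEvent ι 𝓕 r) := by
    rw [(measurePreserving_comp_perm P (swapOn σ)).lintegral_comp (measurable_one.indicator hmeas),
      lintegral_indicator_one hmeas]
  have hpoint (c : ι ⊕ ι → X) :
      2 ^ r * ∑ σ, (ghostEvent ι 𝓕 r).indicator (1 : (ι ⊕ ι → X) → ENNReal) (c ∘ swapOn σ) ≤
        G * 2 ^ Fintype.card ι := by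
    simp only [Set.indicator_apply, Pi.one_apply, Finset.sum_boole]
    exact_mod_cast (two_pow_mul_card_comp_swapOn_mem_ghostEvent_le 𝓕 r c).trans
      (Nat.mul_le_mul_right _ (hG c))
  have havg : 2 ^ r * ν (ghostEvent ι 𝓕 r) * 2 ^ Fintype.card ι ≤ G * 2 ^ Fintype.card ι :=
    calc 2 ^ r * ν (ghostEvent ι 𝓕 r) * 2 ^ Fintype.card ι
      _ = 2 ^ r * ∑ σ : Finset ι, ∫⁻ c, (ghostEvent ι 𝓕 r).indicator 1 (c ∘ swapOn σ) ∂ν := by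
          simp only [hswap, Finset.sum_const, Finset.card_univ, Fintype.card_finset, nsmul_eq_mul]
          push_cast
          ring
      _ = ∫⁻ c, 2 ^ r * ∑ σ, (ghostEvent ι 𝓕 r).indicator 1 (c ∘ swapOn σ) ∂ν := by
          rw [lintegral_const_mul' _ _ (by finiteness), lintegral_finsetSum]
          exact fun σ _ ↦ (measurable_one.indicator hmeas).comp
            (measurePreserving_comp_perm P (swapOn σ)).measurable
      _ ≤ ∫⁻ _, G * 2 ^ Fintype.card ι ∂ν := lintegral_mono hpoint
      _ = G * 2 ^ Fintype.card ι := by simp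
  exact (ENNReal.mul_le_mul_iff_left (by simp) (by simp)).1 havg

open Classical in
lemma measure_missEvent_le_two_mul {𝓕 : Set (Set X)} {r : ℕ}
    (hhit : ∀ A ∈ 𝓕, 1 / 2 ≤ Measure.pi (fun _ : ι ↦ P) {b | r ≤ #{i | b i ∈ A}}) :
    Measure.pi (fun _ ↦ P) (missEvent ι 𝓕) ≤
      2 * Measure.pi (fun _ ↦ P) (ghostEvent ι 𝓕 r) := by
  set μ : Measure (ι → X) := .pi fun _ ↦ P
  set ν : Measure (ι ⊕ ι → X) := .pi fun _ ↦ P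
  have hsplit := measurePreserving_sumPiEquivProdPi_symm fun _ : ι ⊕ ι ↦ P
  set B : Set ((ι → X) × (ι → X)) :=
    (MeasurableEquiv.sumPiEquivProdPi fun _ : ι ⊕ ι ↦ X).symm ⁻¹' toMeasurable ν (ghostEvent ι 𝓕 r)
  have hBmeas : MeasurableSet B := hsplit.measurable (measurableSet_toMeasurable _ _)
  have hsection : missEvent ι 𝓕 ⊆ {a | 1 / 2 ≤ μ (Prod.mk a ⁻¹' B)} := fun a ⟨A, hA, ha⟩ ↦
    (hhit A hA).trans <| measure_mono fun b hb ↦ subset_toMeasurable _ _ ⟨A, hA, ha, hb⟩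
  calc μ (missEvent ι 𝓕) = 2 * (1 / 2 * μ (missEvent ι 𝓕)) := by
        rw [← mul_assoc, one_div, ENNReal.mul_inv_cancel two_ne_zero ENNReal.ofNat_ne_top, one_mul]
    _ ≤ 2 * ∫⁻ a, μ (Prod.mk a ⁻¹' B) ∂μ := by
        grw [hsection, mul_meas_ge_le_lintegral (measurable_measure_prodMk_left hBmeas)]
    _ = 2 * ν (ghostEvent ι 𝓕 r) := by
        rw [← Measure.prod_apply hBmeas,
          hsplit.measure_preimage (measurableSet_toMeasurable _ _).nullMeasurableSet,
          measure_toMeasurable]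

lemma variance_indicator_one_le {A : Set X} (hA : MeasurableSet A) :
    Var[A.indicator 1; P] ≤ P.real A := by
  refine (variance_le_expectation_sq
    (measurable_one.indicator hA).aestronglyMeasurable).trans_eq ?_
  rw [← integral_indicator_one hA]
  congr with a
  by_cases ha : a ∈ A <;> simp [ha]

lemma half_le_measure_half_integral_lt {S : X → ℝ} (hS : MemLp S 2 P) (hmean : 8 ≤ P[S])
    (hvar : Var[S; P] ≤ P[S]) : 1 / 2 ≤ P {a | P[S] / 2 < S a} := by
  have hsub : {a | P[S] / 2 < S a}ᶜ ⊆ {a | P[S] / 2 ≤ |S a - P[S]|} := by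
    intro a ha
    rw [Set.mem_compl_iff, Set.mem_ofPred_eq, not_lt] at ha
    rw [Set.mem_ofPred_eq, abs_sub_comm]
    exact le_abs.2 (.inl (by linarith))
  have hfail : P {a | P[S] / 2 < S a}ᶜ ≤ 2⁻¹ :=
    calc P {a | P[S] / 2 < S a}ᶜ ≤ ENNReal.ofReal (Var[S; P] / (P[S] / 2) ^ 2) :=
          (measure_mono hsub).trans (meas_ge_le_variance_div_sq hS (by linarith))
      _ ≤ ENNReal.ofReal 2⁻¹ := by
          refine ENNReal.ofReal_le_ofReal ((div_le_iff₀ (by positivity)).2 ?_)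
          nlinarith
      _ = 2⁻¹ := by simp
  rw [one_div, ← ENNReal.one_sub_inv_two]
  refine tsub_le_iff_right.2 ?_
  grw [← hfail, ← measure_union_le, Set.union_compl_self, measure_univ]

open Classical in
lemma half_le_measure_le_card_mem {A : Set X} (hA : MeasurableSet A)
    (hm : 8 ≤ P.real A * Fintype.card ι) {r : ℕ} (hr : r ≤ ⌈P.real A * Fintype.card ι / 2⌉₊) :
    1 / 2 ≤ Measure.pi (fun _ : ι ↦ P) {b | r ≤ #{i | b i ∈ A}} := by
  set S : (ι → X) → ℝ := ∑ i, fun b ↦ A.indicator (1 : X → ℝ) (b i)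
  have hSeq (b : ι → X) : S b = #{i | b i ∈ A} := by
    simp only [S, Finset.sum_apply, Set.indicator_apply, Pi.one_apply, Finset.sum_boole]
  have hL2 : MemLp (A.indicator (1 : X → ℝ)) 2 P := memLp_indicator_const 2 hA 1 (by simp)
  have hcoord (i : ι) := hL2.comp_measurePreserving (measurePreserving_eval (fun _ : ι ↦ P) i)
  have hmean : ∫ b, S b ∂.pi (fun _ : ι ↦ P) = P.real A * Fintype.card ι := by
    simp only [S, Finset.sum_apply]
    refine (integral_finsetSum _ fun i _ ↦ (hcoord i).integrable one_le_two).trans ?_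
    have hint (i : ι) := integral_comp_eval (μ := fun _ : ι ↦ P) (i := i) hL2.aestronglyMeasurable
    simp only [Function.comp_apply, Function.eval, hint, integral_indicator_one hA]
    rw [Finset.sum_const, Finset.card_univ, nsmul_eq_mul, mul_comm]
  have hvar : Var[S; .pi fun _ : ι ↦ P] ≤ P.real A * Fintype.card ι := by
    rw [variance_sum_pi fun _ ↦ hL2, Finset.sum_const, Finset.card_univ, nsmul_eq_mul, mul_comm]
    grw [variance_indicator_one_le P hA]
  refine (half_le_measure_half_integral_lt _ (memLp_finsetSum' _ fun i _ ↦ hcoord i)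
    (hmean ▸ hm) (hmean ▸ hvar)).trans (measure_mono fun b hb ↦ hr.trans (Nat.ceil_le.2 ?_))
  rw [← hSeq, ← hmean]
  exact hb.le

theorem measure_missEvent_le {𝓕 : Set (Set X)} {ε : ℝ} (h𝓕 : ∀ A ∈ 𝓕, MeasurableSet A)
    (hP : ∀ A ∈ 𝓕, ε ≤ P.real A) (hm : 8 ≤ ε * Fintype.card ι)
    (hghost : MeasurableSet (ghostEvent ι 𝓕 ⌈ε * Fintype.card ι / 2⌉₊))
    {G : ℕ} (hG : ∀ c : ι ⊕ ι → X, #(traces 𝓕 c) ≤ G) :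
    2 ^ ⌈ε * Fintype.card ι / 2⌉₊ * Measure.pi (fun _ : ι ↦ P) (missEvent ι 𝓕) ≤ 2 * G := by
  classical
  have hhit : ∀ A ∈ 𝓕, 1 / 2 ≤
      Measure.pi (fun _ : ι ↦ P) {b | ⌈ε * Fintype.card ι / 2⌉₊ ≤ #{i | b i ∈ A}} := by
    intro A hA
    have hle : ε * Fintype.card ι ≤ P.real A * Fintype.card ι := by grw [hP A hA]
    exact half_le_measure_le_card_mem P (h𝓕 A hA) (hm.trans hle) (Nat.ceil_mono (by linarith))
  grw [measure_missEvent_le_two_mul P hhit, mul_left_comm,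
    two_pow_mul_measure_ghostEvent_le P hghost hG]

end Symmetrization

section Measurability

lemma measurableSet_of_isSigmaCompact {Z : Type*} [TopologicalSpace Z] [T2Space Z]
    [MeasurableSpace Z] [OpensMeasurableSpace Z] {s : Set Z} (hs : IsSigmaCompact s) :
    MeasurableSet s := by
  obtain ⟨C, hC, rfl⟩ := hs
  exact .iUnion fun i ↦ (hC i).measurableSet

lemma isSigmaCompact_inter {Z : Type*} [PseudoEMetricSpace Z] [SigmaCompactSpace Z] {F U : Set Z}
    (hF : IsClosed F) (hU : IsOpen U) : IsSigmaCompact (F ∩ U) := by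
  obtain ⟨C, hC, -, rfl, -⟩ := hU.exists_iUnion_isClosed
  rw [Set.inter_iUnion]
  exact isSigmaCompact_iUnion _ fun i ↦
    isSigmaCompact_univ.of_isClosed_subset (hF.inter (hC i)) (Set.subset_univ _)

open Classical in
lemma isOpen_setOf_le_card {Z ι : Type*} [TopologicalSpace Z] [Fintype ι] {U : ι → Set Z}
    (hU : ∀ i, IsOpen (U i)) (r : ℕ) : IsOpen {z | r ≤ #{i | z ∈ U i}} := by
  refine isOpen_iff_eventually.2 fun z hz ↦ ?_
  have hstay : ∀ᶠ y in nhds z, ∀ i ∈ ({i | z ∈ U i} : Finset ι), y ∈ U i :=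
    (Filter.eventually_all_finset _).2 fun i hi ↦
      (hU i).eventually_mem (Finset.mem_filter.1 hi).2
  filter_upwards [hstay] with y hy
  exact hz.trans (Finset.card_le_card fun i hi ↦ (Finset.mem_filter_univ i).2 (hy i hi))

variable {V X ι : Type*} [Fintype ι] [PseudoEMetricSpace V] [SigmaCompactSpace V]
  [EMetricSpace X] [SecondCountableTopology X] [SigmaCompactSpace X] [MeasurableSpace X]
  [OpensMeasurableSpace X]

lemma measurableSet_ghostEvent_image {K : Set V} (hK : IsClosed K) {R : V → Set X}
    (hR : IsOpen {p : V × X | p.2 ∈ R p.1}) (r : ℕ) :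
    MeasurableSet (ghostEvent ι (R '' K) r) := by
  classical
  -- The ghost event is the projection of a closed set intersected with an open one.
  have hopen (j : ι ⊕ ι) : IsOpen {p : V × (ι ⊕ ι → X) | p.2 j ∈ R p.1} :=
    hR.preimage (f := fun p : V × (ι ⊕ ι → X) ↦ (p.1, p.2 j)) (by fun_prop)
  have hclosed : IsClosed
      (Prod.fst ⁻¹' K ∩ ⋂ i : ι, {p : V × (ι ⊕ ι → X) | p.2 (.inl i) ∈ R p.1}ᶜ) :=
    (hK.preimage continuous_fst).inter (isClosed_iInter fun i ↦ (hopen _).isClosed_compl)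
  have hσ := isSigmaCompact_inter hclosed
    (isOpen_setOf_le_card (fun i ↦ hopen (.inr i)) r)
  convert measurableSet_of_isSigmaCompact (hσ.image continuous_snd) using 1
  ext c
  simp [ghostEvent, and_assoc]

end Measurability

section Gaussian

lemma exists_gaussianReal_prod_cone_eq_mul_volume :
    ∃ C : ENNReal, ∀ D : Set (ℝ × ℝ), MeasurableSet D →
      (∀ r > 0, ∀ φ, (r * cos φ, r * sin φ) ∈ D ↔ (cos φ, sin φ) ∈ D) →
        (gaussianReal 0 1).prod (gaussianReal 0 1) D =
          C * volume {φ ∈ Set.Ioo (-π) π | (cos φ, sin φ) ∈ D} := by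
  set g : ℝ → ENNReal := fun r ↦
    ENNReal.ofReal (r * ((√(2 * π))⁻¹ ^ 2 * Real.exp (-r ^ 2 / 2))) with hg
  refine ⟨∫⁻ r in Set.Ioi 0, g r, fun D hD hcone ↦ ?_⟩
  have hΘ : MeasurableSet {φ | (cos φ, sin φ) ∈ D} :=
    hD.preimage (f := fun φ ↦ (cos φ, sin φ)) (by fun_prop)
  have hpdf {r : ℝ} (hr : 0 < r) (φ : ℝ) :
      ENNReal.ofReal r • (gaussianPDF 0 1 (r * cos φ) * gaussianPDF 0 1 (r * sin φ)) = g r := by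
    simp only [hg, gaussianPDF, gaussianPDFReal, smul_eq_mul, NNReal.coe_one, mul_one, sub_zero]
    rw [← ENNReal.ofReal_mul (by positivity), ← ENNReal.ofReal_mul hr.le, mul_mul_mul_comm,
      ← Real.exp_add, ← pow_two]
    congr 4
    linear_combination (-r ^ 2 / 2) * cos_sq_add_sin_sq φ
  calc (gaussianReal 0 1).prod (gaussianReal 0 1) D
    _ = ∫⁻ p, D.indicator (fun p ↦ gaussianPDF 0 1 p.1 * gaussianPDF 0 1 p.2) p := by
        rw [gaussianReal_of_var_ne_zero 0 one_ne_zero, prod_withDensity (by fun_prop) (by fun_prop),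
          withDensity_apply _ hD, ← lintegral_indicator hD, ← Measure.volume_eq_prod]
    _ = ∫⁻ p in Set.Ioi 0 ×ˢ Set.Ioo (-π) π, g p.1 * {φ | (cos φ, sin φ) ∈ D}.indicator 1 p.2 := by
        rw [← lintegral_comp_polarCoord_symm]
        refine setLIntegral_congr_fun (measurableSet_Ioi.prod measurableSet_Ioo) fun p hp ↦ ?_
        rw [polarCoord_symm_apply]
        by_cases hφ : p.2 ∈ {φ | (cos φ, sin φ) ∈ D}
        · rw [Set.indicator_of_mem ((hcone _ hp.1 _).2 hφ), hpdf hp.1, Set.indicator_of_mem hφ,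
            Pi.one_apply, mul_one]
        · rw [Set.indicator_of_notMem (mt (hcone _ hp.1 _).1 hφ), Set.indicator_of_notMem hφ,
            smul_zero, mul_zero]
    _ = (∫⁻ r in Set.Ioi 0, g r) * volume {φ ∈ Set.Ioo (-π) π | (cos φ, sin φ) ∈ D} := by
        rw [Measure.volume_eq_prod, ← Measure.prod_restrict,
          lintegral_prod_mul (by fun_prop) (measurable_one.indicator hΘ).aemeasurable,
          lintegral_indicator_one hΘ, Measure.restrict_apply hΘ, Set.inter_comm]
        rfl

lemma gaussianReal_prod_cone {D : Set (ℝ × ℝ)} (hD : MeasurableSet D)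
    (hcone : ∀ r > 0, ∀ φ, (r * cos φ, r * sin φ) ∈ D ↔ (cos φ, sin φ) ∈ D) :
    (gaussianReal 0 1).prod (gaussianReal 0 1) D =
      volume {φ ∈ Set.Ioo (-π) π | (cos φ, sin φ) ∈ D} / ENNReal.ofReal (2 * π) := by
  obtain ⟨C, hC⟩ := exists_gaussianReal_prod_cone_eq_mul_volume
  have htotal : 1 = C * ENNReal.ofReal (2 * π) := by
    have h := hC _ .univ (by simp)
    simp only [measure_univ, Set.mem_univ, and_true, Set.ofPred_mem_eq, Real.volume_Ioo] at h
    rw [h]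
    ring_nf
  rw [hC D hD hcone, ENNReal.eq_inv_of_mul_eq_one_left htotal.symm, div_eq_mul_inv, mul_comm]

lemma setOf_sin_mul_sin_add_neg {θ : ℝ} (h₀ : 0 ≤ θ) (hπ : θ ≤ π) :
    {φ ∈ Set.Ioo (-π) π | sin φ * sin (φ + θ) < 0} = Set.Ioo (-θ) 0 ∪ Set.Ioo (π - θ) π := by
  ext φ
  simp only [Set.mem_ofPred_eq, Set.mem_Ioo, Set.mem_union]
  refine ⟨fun ⟨⟨hφ, hφπ⟩, hneg⟩ ↦ ?_, ?_⟩
  · by_contra! hout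
    refine hneg.not_ge ?_
    rcases le_or_gt φ (-θ) with hle | hgt
    · exact mul_nonneg_of_nonpos_of_nonpos
        (sin_nonpos_of_nonpos_of_neg_pi_le (by linarith) hφ.le)
        (sin_nonpos_of_nonpos_of_neg_pi_le (by linarith) (by linarith))
    · have hφ₀ : 0 ≤ φ := hout.1 hgt
      have hφθ : φ ≤ π - θ := not_lt.1 fun h ↦ hφπ.not_ge (hout.2 h)
      exact mul_nonneg (sin_nonneg_of_nonneg_of_le_pi hφ₀ hφπ.le)
        (sin_nonneg_of_nonneg_of_le_pi (by linarith) (by linarith))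
  · rintro (⟨h₁, h₂⟩ | ⟨h₁, h₂⟩)
    · exact ⟨⟨by linarith, by linarith⟩,
        mul_neg_of_neg_of_pos (sin_neg_of_neg_of_neg_pi_lt h₂ (by linarith))
          (sin_pos_of_pos_of_lt_pi (by linarith) (by linarith))⟩
    · refine ⟨⟨by linarith, h₂⟩,
        mul_neg_of_pos_of_neg (sin_pos_of_pos_of_lt_pi (by linarith) h₂) ?_⟩
      rw [← sin_sub_two_pi]
      exact sin_neg_of_neg_of_neg_pi_lt (by linarith) (by linarith)

lemma gaussianReal_prod_double_wedge {θ : ℝ} (h₀ : 0 ≤ θ) (hπ : θ ≤ π) :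
    (gaussianReal 0 1).prod (gaussianReal 0 1) {p | p.2 * (cos θ * p.2 + sin θ * p.1) < 0} =
      ENNReal.ofReal (θ / π) := by
  have hdir : {φ ∈ Set.Ioo (-π) π |
      (cos φ, sin φ) ∈ {p : ℝ × ℝ | p.2 * (cos θ * p.2 + sin θ * p.1) < 0}} =
        Set.Ioo (-θ) 0 ∪ Set.Ioo (π - θ) π := by
    rw [← setOf_sin_mul_sin_add_neg h₀ hπ]
    simp only [Set.mem_ofPred_eq, sin_add, mul_comm]
  have hdisj : Disjoint (Set.Ioo (-θ) 0) (Set.Ioo (π - θ) π) :=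
    Set.disjoint_left.2 fun φ h h' ↦ by linarith [h.2, h'.1]
  rw [gaussianReal_prod_cone (measurableSet_lt (by fun_prop) (by fun_prop)), hdir,
    measure_union hdisj measurableSet_Ioo, Real.volume_Ioo, Real.volume_Ioo,
    ← ENNReal.ofReal_add (by linarith) (by linarith), ← ENNReal.ofReal_div_of_pos (by positivity)]
  · congr 1
    field_simp
    ring
  · intro r hr φ
    have hscale : r * sin φ * (cos θ * (r * sin φ) + sin θ * (r * cos φ)) =
        r ^ 2 * (sin φ * (cos θ * sin φ + sin θ * cos φ)) := by ring
    simp only [Set.mem_ofPred_eq, hscale, ← smul_eq_mul (r ^ 2),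
      smul_neg_iff_of_pos_left (pow_pos hr 2)]

variable {E : Type*} [NormedAddCommGroup E] [InnerProductSpace ℝ E] [FiniteDimensional ℝ E]
  [MeasurableSpace E] [BorelSpace E]

lemma charFun_map_inner_inner (μ : Measure E) (x y : E) (t : WithLp 2 (ℝ × ℝ)) :
    charFun ((μ.map fun a ↦ (⟪a, x⟫, ⟪a, y⟫)).map (WithLp.toLp 2)) t =
      charFun μ (t.fst • x + t.snd • y) := by
  rw [Measure.map_map (by fun_prop) (by fun_prop), charFun_apply, charFun_apply,
    integral_map (by fun_prop) (by fun_prop)]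
  simp [WithLp.prod_inner_apply, inner_add_right, inner_smul_right]

lemma inner_toLp_prod (p q : ℝ × ℝ) :
    ⟪WithLp.toLp 2 p, WithLp.toLp 2 q⟫ = p.1 * q.1 + p.2 * q.2 := by
  simp [WithLp.prod_inner_apply, mul_comm]

lemma map_prod_eq_stdGaussian :
    ((gaussianReal 0 1).prod (gaussianReal 0 1)).map (WithLp.toLp 2) =
      stdGaussian (WithLp 2 (ℝ × ℝ)) := by
  refine Measure.ext_of_charFun (funext fun t ↦ ?_)
  rw [charFun_prod, charFun_stdGaussian, charFun_gaussianReal, charFun_gaussianReal,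
    ← Complex.exp_add, ← Complex.ofReal_pow ‖t‖, WithLp.prod_norm_sq_eq_of_L2]
  simp only [WithLp.ofLp_fst, WithLp.ofLp_snd, norm_eq_abs, sq_abs, NNReal.coe_one]
  congr 1
  push_cast
  ring

lemma map_inner_inner_stdGaussian_congr {F : Type*} [NormedAddCommGroup F] [InnerProductSpace ℝ F]
    [FiniteDimensional ℝ F] [MeasurableSpace F] [BorelSpace F] {x y : E} {x' y' : F}
    (hx : ‖x‖ = ‖x'‖) (hy : ‖y‖ = ‖y'‖) (hxy : ⟪x, y⟫ = ⟪x', y'⟫) :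
    (stdGaussian E).map (fun a ↦ (⟪a, x⟫, ⟪a, y⟫)) =
      (stdGaussian F).map fun a ↦ (⟪a, x'⟫, ⟪a, y'⟫) := by
  refine (MeasurableEquiv.toLp 2 (ℝ × ℝ)).map_measurableEquiv_injective <|
    Measure.ext_of_charFun <| funext fun t ↦ ?_
  simp only [MeasurableEquiv.coe_toLp, charFun_map_inner_inner, charFun_stdGaussian,
    ← Complex.ofReal_pow, norm_add_sq_real, norm_smul, inner_smul_left, inner_smul_right, hx, hy,
    hxy]

lemma map_inner_inner_stdGaussian (x y : E) :
    (stdGaussian E).map (fun a ↦ (⟪a, x⟫, ⟪a, y⟫)) =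
      ((gaussianReal 0 1).prod (gaussianReal 0 1)).map fun p ↦
        (‖x‖ * p.2, ‖y‖ * (cos (angle x y) * p.2 + sin (angle x y) * p.1)) := by
  set x' : WithLp 2 (ℝ × ℝ) := .toLp 2 (0, ‖x‖)
  set y' : WithLp 2 (ℝ × ℝ) := .toLp 2 (‖y‖ * sin (angle x y), ‖y‖ * cos (angle x y))
  rw [map_inner_inner_stdGaussian_congr (x' := x') (y' := y'), ← map_prod_eq_stdGaussian,
    Measure.map_map (by fun_prop) (by fun_prop)]
  · congr 1
    ext p <;> simp only [Function.comp_apply, inner_toLp_prod, x', y'] <;> ring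
  · simp [x']
  · rw [← sq_eq_sq₀ (norm_nonneg _) (norm_nonneg _), WithLp.prod_norm_sq_eq_of_L2]
    simp [y', mul_pow, ← mul_add]
  · rw [← cos_angle_mul_norm_mul_norm]
    simp only [inner_toLp_prod, x', y']
    ring

theorem stdGaussian_inner_mul_inner_neg {x y : E} (hx : x ≠ 0) (hy : y ≠ 0) :
    stdGaussian E {a | ⟪a, x⟫ * ⟪a, y⟫ < 0} = ENNReal.ofReal (angle x y / π) := by
  have hneg : MeasurableSet {p : ℝ × ℝ | p.1 * p.2 < 0} :=
    measurableSet_lt (by fun_prop) measurable_const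
  calc stdGaussian E {a | ⟪a, x⟫ * ⟪a, y⟫ < 0}
    _ = (stdGaussian E).map (fun a ↦ (⟪a, x⟫, ⟪a, y⟫)) {p | p.1 * p.2 < 0} := by
        rw [Measure.map_apply (by fun_prop) hneg]
        rfl
    _ = (gaussianReal 0 1).prod (gaussianReal 0 1)
          {p | p.2 * (cos (angle x y) * p.2 + sin (angle x y) * p.1) < 0} := by
        rw [map_inner_inner_stdGaussian, Measure.map_apply (by fun_prop) hneg]
        congr 1
        ext p
        rw [Set.mem_preimage, Set.mem_ofPred_eq, mul_mul_mul_comm ‖x‖, ← smul_eq_mul (‖x‖ * ‖y‖),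
          smul_neg_iff_of_pos_left (mul_pos (norm_pos_iff.2 hx) (norm_pos_iff.2 hy))]
        rfl
    _ = ENNReal.ofReal (angle x y / π) :=
        gaussianReal_prod_double_wedge (angle_nonneg x y) (angle_le_pi x y)

variable {ι : Type*} [Fintype ι]

/-- The measurement vectors `a` whose inner products with `x` and `v` have strictly opposite
signs. -/
def signMismatch (x v : ι → ℝ) : Set (ι → ℝ) :=
  {a | (a ⬝ᵥ x) * (a ⬝ᵥ v) < 0}

lemma isOpen_signMismatch (x : ι → ℝ) :
    IsOpen {p : (ι → ℝ) × (ι → ℝ) | p.2 ∈ signMismatch x p.1} := by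
  refine isOpen_lt (f := fun p : (ι → ℝ) × (ι → ℝ) ↦ (p.2 ⬝ᵥ x) * (p.2 ⬝ᵥ p.1)) ?_ continuous_const
  simp only [dotProduct]
  fun_prop

lemma pi_gaussianReal_signMismatch {x v : ι → ℝ} (hx : x ≠ 0) (hv : v ≠ 0) :
    (Measure.pi fun _ ↦ gaussianReal 0 1) (signMismatch x v) =
      ENNReal.ofReal (angle (WithLp.toLp 2 x) (WithLp.toLp 2 v) / π) := by
  rw [← stdGaussian_inner_mul_inner_neg (by simpa) (by simpa), ← map_pi_eq_stdGaussian,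
    Measure.map_apply (by fun_prop) (measurableSet_lt (by fun_prop) measurable_const)]
  simp [signMismatch, EuclideanSpace.inner_toLp_toLp, dotProduct_comm]

end Gaussian

section GoemansWilliamson

/-- The Goemans–Williamson constant `α`, the best constant in `α * (1 - cos θ) ≤ 2 * θ / π`
for `0 < θ < 2 * π`. -/
def goemansWilliamsonConst : ℝ :=
  sInf ((fun θ : ℝ ↦ (2 / π) * θ / (1 - cos θ)) '' Set.Ioo 0 (2 * π))

lemma one_sub_cos_le {θ : ℝ} (hθ : 0 ≤ θ) : 1 - cos θ ≤ θ := by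
  rcases le_total θ 2 with h | h
  · nlinarith [one_sub_sq_div_two_le_cos (x := θ)]
  · linarith [neg_one_le_cos θ]

lemma two_div_pi_le_of_mem_Ioo {θ : ℝ} (hθ : θ ∈ Set.Ioo 0 (2 * π)) :
    2 / π ≤ (2 / π) * θ / (1 - cos θ) := by
  have hcos : cos θ ≠ 1 := fun h ↦
    hθ.1.ne' ((cos_eq_one_iff_of_lt_of_lt (by linarith [hθ.1, hθ.2]) hθ.2).1 h)
  rw [le_div_iff₀ (sub_pos.2 ((cos_le_one θ).lt_of_ne hcos))]
  gcongr
  exact one_sub_cos_le hθ.1.le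

lemma goemansWilliamsonConst_pos : 0 < goemansWilliamsonConst := by
  refine (by positivity : 0 < 2 / π).trans_le <|
    le_csInf ((Set.nonempty_Ioo.2 (by positivity)).image _) ?_
  rintro _ ⟨θ, hθ, rfl⟩
  exact two_div_pi_le_of_mem_Ioo hθ

lemma goemansWilliamsonConst_mul_le {θ : ℝ} (h₀ : 0 ≤ θ) (hπ : θ ≤ π) :
    goemansWilliamsonConst * (1 - cos θ) ≤ 2 * (θ / π) := by
  rcases (cos_le_one θ).eq_or_lt with h | h
  · rw [h, sub_self, mul_zero]
    positivity
  have hθ : 0 < θ := h₀.lt_of_ne (by rintro rfl; simp at h)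
  have hle : goemansWilliamsonConst ≤ (2 / π) * θ / (1 - cos θ) := by
    refine csInf_le ⟨2 / π, ?_⟩ ⟨θ, ⟨hθ, by linarith [pi_pos]⟩, rfl⟩
    rintro _ ⟨φ, hφ, rfl⟩
    exact two_div_pi_le_of_mem_Ioo hφ
  rwa [le_div_iff₀ (sub_pos.2 h), div_mul_eq_mul_div, mul_div_assoc] at hle

lemma norm_sub_sq_le_angle {E : Type*} [NormedAddCommGroup E] [InnerProductSpace ℝ E] {x y : E}
    (hx : ‖x‖ = 1) (hy : ‖y‖ = 1) :
    ‖x - y‖ ^ 2 ≤ 4 / goemansWilliamsonConst * (angle x y / π) := by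
  have hcos : ‖x - y‖ ^ 2 = 2 * (1 - cos (angle x y)) := by
    rw [norm_sub_sq_real, ← cos_angle_mul_norm_mul_norm, hx, hy]
    ring
  rw [hcos, div_mul_eq_mul_div, le_div_iff₀ goemansWilliamsonConst_pos]
  linarith [goemansWilliamsonConst_mul_le (angle_nonneg x y) (angle_le_pi x y)]

end GoemansWilliamson

section Sparse

variable {ι κ : Type*} [Fintype ι] [Fintype κ]

lemma card_traces_signMismatch_le (x : ι → ℝ) (s : Finset ι) (c : κ → ι → ℝ) :
    #(traces (signMismatch x '' {v | ∀ i ∉ s, v i = 0}) c) ≤ (Fintype.card κ + 1) ^ #s := by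
  let Φ : (s → ℝ) →ₗ[ℝ] (ι → ℝ) → ℝ :=
    (LinearMap.pi fun a ↦ (a ⬝ᵥ x) • dotProductBilin ℝ ℝ a) ∘ₗ
      Function.ExtendByZero.linearMap ℝ Subtype.val
  have hΦ (w) : {a | Φ w a < 0} = signMismatch x (Function.extend Subtype.val w 0) := rfl
  calc #(traces (signMismatch x '' {v | ∀ i ∉ s, v i = 0}) c)
    _ ≤ #(traces (Set.range fun w ↦ {a | Φ w a < 0}) c) := by
        refine Finset.card_le_card (traces_mono ?_ c)
        rintro _ ⟨v, hv, rfl⟩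
        refine ⟨fun i ↦ v i, ?_⟩
        have hext : Function.extend Subtype.val (fun i : s ↦ v i) 0 = v := by
          ext i
          by_cases hi : i ∈ s
          · exact Subtype.val_injective.extend_apply (fun i : s ↦ v i) 0 ⟨i, hi⟩
          · rw [Function.extend_apply' _ _ _ (by simpa using hi), hv i hi, Pi.zero_apply]
        exact (hΦ _).trans (congrArg _ hext)
    _ ≤ (Fintype.card κ + 1) ^ Module.finrank ℝ (s → ℝ) := card_traces_negSets_le Φ c
    _ = (Fintype.card κ + 1) ^ #s := by
        rw [Module.finrank_fintype_fun_eq_card, Fintype.card_coe]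

lemma setOf_sparse {n k : ℕ} (hkn : k ≤ n) :
    {v | sparse n k v} = ⋃ s ∈ Finset.univ.powersetCard k, {v : Fin n → ℝ | ∀ i ∉ s, v i = 0} := by
  ext v
  simp only [sparse, Set.mem_ofPred_eq, Set.mem_iUnion, Finset.mem_powersetCard_univ, exists_prop]
  refine ⟨fun ⟨s, hs, hv⟩ ↦ ?_, fun ⟨s, hs, hv⟩ ↦ ⟨s, hs.le, hv⟩⟩
  obtain ⟨t, hst, ht⟩ := Finset.exists_superset_card_eq hs (by simpa)
  exact ⟨t, ht, fun i hi ↦ hv i fun h ↦ hi (hst h)⟩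

lemma isClosed_setOf_sparse {n k : ℕ} (hkn : k ≤ n) : IsClosed {v | sparse n k v} := by
  rw [setOf_sparse hkn]
  refine isClosed_biUnion_finset fun s _ ↦ ?_
  simp only [Set.ofPred_forall]
  exact isClosed_iInter fun i ↦ isClosed_iInter fun _ ↦
    isClosed_eq (continuous_apply i) continuous_const

lemma card_traces_signMismatch_sparse_le {n k : ℕ} (hkn : k ≤ n) (x : Fin n → ℝ)
    (c : κ → Fin n → ℝ) :
    #(traces (signMismatch x '' {v | sparse n k v}) c) ≤ n ^ k * (Fintype.card κ + 1) ^ k := by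
  rw [setOf_sparse hkn, Set.image_iUnion₂]
  calc #(traces (⋃ s ∈ Finset.univ.powersetCard k, signMismatch x '' {v | ∀ i ∉ s, v i = 0}) c)
    _ ≤ ∑ s ∈ Finset.univ.powersetCard k,
          #(traces (signMismatch x '' {v | ∀ i ∉ s, v i = 0}) c) :=
        card_traces_biUnion_le _ _ c
    _ ≤ ∑ s ∈ (Finset.univ : Finset (Fin n)).powersetCard k, (Fintype.card κ + 1) ^ k :=
        Finset.sum_le_sum fun s hs ↦ by
          simpa only [Finset.mem_powersetCard_univ.1 hs] using card_traces_signMismatch_le x s c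
    _ = n.choose k * (Fintype.card κ + 1) ^ k := by simp
    _ ≤ n ^ k * (Fintype.card κ + 1) ^ k := Nat.mul_le_mul_right _ (Nat.choose_le_pow n k)

end Sparse

section SampleSize

lemma logb_two_le_self {y : ℝ} (hy : 0 < y) : logb 2 y ≤ y := by
  have hhalf : log (y / 2) ≤ y / 2 - 1 := log_le_sub_one_of_pos (by positivity)
  rw [log_div hy.ne' two_ne_zero] at hhalf
  rw [logb, div_le_iff₀ (by positivity)]
  nlinarith [log_two_gt_d9, log_two_lt_d9]

lemma seven_fifths_le_logb_two_exp_one : 7 / 5 ≤ logb 2 (Real.exp 1) := by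
  rw [logb, log_exp, le_div_iff₀ (by positivity)]
  linarith [log_two_lt_d9]

variable {n k m : ℕ} {ε δ : ℝ}

lemma mul_le_mul_sampleSize (hk : 1 ≤ k) (hkn : k ≤ n) (hε : ε ∈ Set.Ioo 0 1)
    (hm : 8 * (⌊2 * k * logb 2 (n * Real.exp 1)⌋₊ : ℝ) / ε * logb 2 (8 * Real.exp 1 / ε) ≤ m) :
    8 * (2 * logb 2 n + 9 / 5) * (22 / 5 - logb 2 ε) * k ≤ ε * m := by
  obtain ⟨hε₀, hε₁⟩ := hε
  have hn : (1 : ℝ) ≤ n := by exact_mod_cast hk.trans hkn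
  have hk' : (1 : ℝ) ≤ k := by exact_mod_cast hk
  have hlogn : 0 ≤ logb 2 n := logb_nonneg one_lt_two hn
  have hlogε : logb 2 ε ≤ 0 := logb_nonpos one_lt_two hε₀.le hε₁.le
  have hlog8 : logb 2 8 = 3 := by
    rw [show (8 : ℝ) = 2 ^ 3 by norm_num, logb_pow, logb_self_eq_one one_lt_two]
    norm_num
  have hfloor : k * (2 * logb 2 n + 9 / 5) ≤ ⌊2 * k * logb 2 (n * Real.exp 1)⌋₊ := by
    have h := Nat.lt_floor_add_one (2 * k * logb 2 (n * Real.exp 1))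
    rw [logb_mul (by positivity) (by positivity)] at h ⊢
    nlinarith [seven_fifths_le_logb_two_exp_one]
  have hlog : 22 / 5 - logb 2 ε ≤ logb 2 (8 * Real.exp 1 / ε) := by
    rw [logb_div (by positivity) (by positivity), logb_mul (by positivity) (by positivity), hlog8]
    linarith [seven_fifths_le_logb_two_exp_one]
  rw [div_mul_eq_mul_div, div_le_iff₀ hε₀] at hm
  calc 8 * (2 * logb 2 n + 9 / 5) * (22 / 5 - logb 2 ε) * k
    _ = 8 * (k * (2 * logb 2 n + 9 / 5)) * (22 / 5 - logb 2 ε) := by ring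
    _ ≤ 8 * ⌊2 * k * logb 2 (n * Real.exp 1)⌋₊ * logb 2 (8 * Real.exp 1 / ε) := by
        gcongr
        linarith
    _ ≤ ε * m := by rwa [mul_comm ε]

lemma logb_two_mul_add_one_le (hk : 1 ≤ k) (hkn : k ≤ n) (hm : 1 ≤ m) (hε : 0 < ε) :
    logb 2 (2 * m + 1) ≤ 5 + logb 2 n - logb 2 ε + ε * m / k / 8 := by
  have hm' : (1 : ℝ) ≤ m := by exact_mod_cast hm
  have hn : (0 : ℝ) < n := by exact_mod_cast hk.trans hkn
  set u : ℝ := ε * m / k / 8 with hu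
  have hu₀ : 0 < u := by positivity
  have hlog32 : logb 2 32 = 5 := by
    rw [show (32 : ℝ) = 2 ^ 5 by norm_num, logb_pow, logb_self_eq_one one_lt_two]
    norm_num
  have harg : 2 * (m : ℝ) + 1 ≤ 32 * n / ε * u :=
    calc 2 * (m : ℝ) + 1
      _ ≤ 4 * m := by linarith
      _ = 32 * k / ε * u := by rw [hu]; field_simp; norm_num
      _ ≤ 32 * n / ε * u := by gcongr
  calc logb 2 (2 * m + 1)
    _ ≤ logb 2 (32 * n / ε * u) := logb_le_logb_of_le one_lt_two (by positivity) harg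
    _ = 5 + logb 2 n - logb 2 ε + logb 2 u := by
        rw [logb_mul (by positivity) hu₀.ne', logb_div (by positivity) hε.ne',
          logb_mul (by norm_num) hn.ne', hlog32]
    _ ≤ 5 + logb 2 n - logb 2 ε + u := by gcongr; exact logb_two_le_self hu₀

lemma logb_growth_le (hk : 1 ≤ k) (hkn : k ≤ n) (hε : ε ∈ Set.Ioo 0 1)
    (hm : 8 * (⌊2 * k * logb 2 (n * Real.exp 1)⌋₊ : ℝ) / ε * logb 2 (8 * Real.exp 1 / ε) ≤ m) :
    8 ≤ ε * m ∧ logb 2 ((n * (2 * m + 1)) ^ k) ≤ ε * m / 4 := by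
  have hk' : (1 : ℝ) ≤ k := by exact_mod_cast hk
  have hn : (1 : ℝ) ≤ n := by exact_mod_cast hk.trans hkn
  have hlogn : 0 ≤ logb 2 n := logb_nonneg one_lt_two hn
  have hlogε : logb 2 ε ≤ 0 := logb_nonpos one_lt_two hε.1.le hε.2.le
  have hsize := mul_le_mul_sampleSize hk hkn hε hm
  rw [← le_div_iff₀ (by positivity)] at hsize
  have hu : 8 * (5 + 2 * logb 2 n - logb 2 ε) ≤ ε * m / k := by nlinarith
  have h8 : 8 ≤ ε * m := by
    rw [le_div_iff₀ (by positivity)] at hu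
    nlinarith
  have hm₁ : 1 ≤ m := Nat.one_le_iff_ne_zero.2 fun h ↦ by norm_num [h] at h8
  refine ⟨h8, ?_⟩
  calc logb 2 ((n * (2 * m + 1)) ^ k)
    _ = k * (logb 2 n + logb 2 (2 * m + 1)) := by
        rw [logb_pow, logb_mul (by positivity) (by positivity)]
    _ ≤ k * (ε * m / k / 4) := by
        gcongr
        linarith [logb_two_mul_add_one_le hk hkn hm₁ hε.1]
    _ = ε * m / 4 := by field_simp

lemma two_mul_growth_le (hk : 1 ≤ k) (hkn : k ≤ n) (hε : ε ∈ Set.Ioo 0 1) (hδ : 0 < δ)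
    (hm : max (8 * (⌊2 * k * logb 2 (n * Real.exp 1)⌋₊ : ℝ) / ε * logb 2 (8 * Real.exp 1 / ε))
      (4 / ε * logb 2 (2 / δ)) ≤ m) :
    2 * ((n * (2 * m + 1)) ^ k : ℝ) ≤ 2 ^ ⌈ε * m / 2⌉₊ * δ := by
  have hn : (0 : ℝ) < n := by exact_mod_cast hk.trans hkn
  have hgrowth : ((n * (2 * m + 1)) ^ k : ℝ) ≤ 2 ^ (ε * m / 4) :=
    (logb_le_iff_le_rpow one_lt_two (by positivity)).1
      (logb_growth_le hk hkn hε ((le_max_left _ _).trans hm)).2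
  have hδm : 2 ≤ 2 ^ (ε * m / 4) * δ := by
    have h := (le_max_right _ _).trans hm
    rw [div_mul_eq_mul_div, div_le_iff₀ hε.1] at h
    rw [← div_le_iff₀ hδ, ← logb_le_iff_le_rpow one_lt_two (by positivity)]
    linarith
  calc 2 * ((n * (2 * m + 1)) ^ k : ℝ)
    _ ≤ 2 ^ (ε * m / 4) * δ * 2 ^ (ε * m / 4) := by gcongr
    _ = 2 ^ (ε * m / 2) * δ := by
        rw [mul_right_comm, ← rpow_add two_pos]
        ring_nf
    _ ≤ 2 ^ ⌈ε * m / 2⌉₊ * δ := by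
        rw [← rpow_natCast]
        gcongr
        · exact one_le_two
        · exact Nat.le_ceil _

end SampleSize

section Recovery

lemma notMem_signMismatch {ι : Type*} [Fintype ι] {x v a : ι → ℝ}
    (h : 0 ≤ a ⬝ᵥ v ↔ 0 ≤ a ⬝ᵥ x) : a ∉ signMismatch x v := fun hneg ↦
  (mul_neg_iff.1 hneg).elim (fun h' ↦ h'.2.not_ge (h.2 h'.1.le)) fun h' ↦
    h'.1.not_ge (h.1 h'.2.le)

lemma le_pi_gaussianReal_signMismatch {ι : Type*} [Fintype ι] {x v : ι → ℝ} {ε : ℝ}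
    (hx : ∑ j, x j ^ 2 = 1) (hv : ∑ j, v j ^ 2 = 1)
    (hfar : 4 / goemansWilliamsonConst * ε ≤ ∑ j, (v j - x j) ^ 2) :
    ε ≤ (Measure.pi fun _ ↦ gaussianReal 0 1).real (signMismatch x v) := by
  have hnorm {w : ι → ℝ} (hw : ∑ j, w j ^ 2 = 1) : ‖WithLp.toLp 2 w‖ = 1 := by
    rw [← sq_eq_sq₀ (norm_nonneg _) zero_le_one, EuclideanSpace.real_norm_sq_eq, one_pow, hw]
  have hne {w : ι → ℝ} (hw : ∑ j, w j ^ 2 = 1) : w ≠ 0 := by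
    rintro rfl
    simp at hw
  have hle := norm_sub_sq_le_angle (hnorm hv) (hnorm hx)
  rw [← WithLp.toLp_sub, EuclideanSpace.real_norm_sq_eq, angle_comm] at hle
  rw [measureReal_def, pi_gaussianReal_signMismatch (hne hx) (hne hv),
    ENNReal.toReal_ofReal (by have := angle_nonneg (WithLp.toLp 2 x) (WithLp.toLp 2 v); positivity)]
  exact le_of_mul_le_mul_left (hfar.trans hle) (div_pos four_pos goemansWilliamsonConst_pos)

lemma measure_missEvent_signMismatch_le {n k m : ℕ} {ε δ : ℝ} (hk : 1 ≤ k) (hkn : k ≤ n)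
    (hε : ε ∈ Set.Ioo 0 1) (hδ : 0 < δ)
    (hm : max (8 * (⌊2 * k * logb 2 (n * Real.exp 1)⌋₊ : ℝ) / ε * logb 2 (8 * Real.exp 1 / ε))
      (4 / ε * logb 2 (2 / δ)) ≤ m)
    (P : Measure (Fin n → ℝ)) [IsProbabilityMeasure P] (x : Fin n → ℝ) {K : Set (Fin n → ℝ)}
    (hK : IsClosed K) (hsparse : ∀ v ∈ K, sparse n k v)
    (hmass : ∀ v ∈ K, ε ≤ P.real (signMismatch x v)) :
    Measure.pi (fun _ : Fin m ↦ P) (missEvent (Fin m) (signMismatch x '' K)) ≤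
      ENNReal.ofReal δ := by
  have hmeas : ∀ A ∈ signMismatch x '' K, MeasurableSet A :=
    Set.forall_mem_image.2 fun v _ ↦
      ((isOpen_signMismatch x).preimage (Continuous.prodMk_right v)).measurableSet
  have hgrowth (c : Fin m ⊕ Fin m → Fin n → ℝ) :
      #(traces (signMismatch x '' K) c) ≤ (n * (2 * m + 1)) ^ k := by
    refine (Finset.card_le_card (traces_mono (Set.image_mono hsparse) c)).trans ?_
    refine (card_traces_signMismatch_sparse_le hkn x c).trans_eq ?_
    rw [mul_pow, Fintype.card_sum, Fintype.card_fin, two_mul]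
  have h8 := (logb_growth_le hk hkn hε ((le_max_left _ _).trans hm)).1
  have hmiss := measure_missEvent_le P hmeas (Set.forall_mem_image.2 hmass)
    (by rwa [Fintype.card_fin]) (measurableSet_ghostEvent_image hK (isOpen_signMismatch x) _)
    hgrowth
  rw [Fintype.card_fin] at hmiss
  have hnum : (2 * ((n * (2 * m + 1)) ^ k : ℕ) : ENNReal) ≤
      2 ^ ⌈ε * m / 2⌉₊ * ENNReal.ofReal δ := by
    have h := ENNReal.ofReal_le_ofReal (two_mul_growth_le hk hkn hε hδ hm)
    rw [ENNReal.ofReal_mul zero_le_two, ENNReal.ofReal_mul (by positivity),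
      ENNReal.ofReal_pow zero_le_two, ENNReal.ofReal_ofNat] at h
    exact_mod_cast h
  exact (ENNReal.mul_le_mul_iff_right (by simp) (by simp)).1 (hmiss.trans hnum)

theorem consistent_obcs_gaussian_recovery_general {n k : ℕ} (hk : 1 ≤ k) (hkn : k ≤ n)
    {x : Fin n → ℝ} (hx : ∑ j, x j ^ 2 = 1) {ε δ : ℝ} (hε : ε ∈ Set.Ioo 0 1) (hδ : 0 < δ) {m : ℕ}
    (hm : max (8 * (⌊2 * k * logb 2 (n * Real.exp 1)⌋₊ : ℝ) / ε * logb 2 (8 * Real.exp 1 / ε))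
      (4 / ε * logb 2 (2 / δ)) ≤ m) :
    1 - ENNReal.ofReal δ ≤
      (Measure.pi fun _ : Fin m ↦ Measure.pi fun _ : Fin n ↦ gaussianReal 0 1)
        {a | ∀ v, sparse n k v → ∑ j, v j ^ 2 = 1 →
          (∀ i, 0 ≤ ∑ j, a i j * v j ↔ 0 ≤ ∑ j, a i j * x j) →
          ∑ j, (v j - x j) ^ 2 ≤ 4 / goemansWilliamsonConst * ε} := by
  set K : Set (Fin n → ℝ) := {v | sparse n k v ∧ ∑ j, v j ^ 2 = 1 ∧
    4 / goemansWilliamsonConst * ε ≤ ∑ j, (v j - x j) ^ 2}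
  have hclosed : IsClosed K := (isClosed_setOf_sparse hkn).inter <|
    (isClosed_eq (f := fun v : Fin n → ℝ ↦ ∑ j, v j ^ 2) (by fun_prop) continuous_const).inter
      (isClosed_le (g := fun v : Fin n → ℝ ↦ ∑ j, (v j - x j) ^ 2) continuous_const (by fun_prop))
  have hmiss := measure_missEvent_signMismatch_le hk hkn hε hδ hm _ x hclosed (fun v hv ↦ hv.1)
    fun v hv ↦ le_pi_gaussianReal_signMismatch hx hv.2.1 hv.2.2
  set μ := Measure.pi fun _ : Fin m ↦ Measure.pi fun _ : Fin n ↦ gaussianReal 0 1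
  rw [tsub_le_iff_right, ← measure_univ (μ := μ)]
  refine (measure_mono fun a _ ↦ ?_).trans ((measure_union_le _ _).trans (by gcongr))
  by_contra! ha
  simp only [Set.mem_union, not_or, Set.mem_ofPred_eq, not_forall, not_le] at ha
  obtain ⟨⟨v, hv, hv₁, hcons, hfar⟩, hmem⟩ := ha
  exact hmem ⟨_, ⟨v, ⟨hv, hv₁, hfar.le⟩, rfl⟩, fun i ↦ notMem_signMismatch (hcons i)⟩

end Recovery

theorem consistent_obcs_gaussian_recovery (n k : ℕ) (hn : 2 ≤ n) (hk1 : 1 ≤ k) (hkn : k ≤ n)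
    (x : Fin n → ℝ) (hx : sparse n k x) (hxnorm : ∑ j, (x j) ^ 2 = 1)
    (ε δ : ℝ) (hε : ε ∈ Set.Ioo (0 : ℝ) 1) (hδ : δ ∈ Set.Ioo (0 : ℝ) 1)
    (m : ℕ)
    (hm : max ((8 * (Nat.floor (2 * k * logb 2 (n * Real.exp 1)) : ℝ) / ε) * logb 2 (8 * Real.exp 1 / ε))
              ((4 / ε) * logb 2 (2 / δ)) ≤ (m : ℝ)) :
    1 - ENNReal.ofReal δ ≤
      (Measure.pi fun _ : Fin m => (Measure.pi fun _ : Fin n => ProbabilityTheory.gaussianReal 0 1))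
        {a : Fin m → Fin n → ℝ | ∀ xh : Fin n → ℝ,
          sparse n k xh → (∑ j, (xh j) ^ 2 = 1) →
          (∀ i : Fin m, (0 ≤ ∑ j, a i j * xh j) ↔ (0 ≤ ∑ j, a i j * x j)) →
          ∑ j, (xh j - x j) ^ 2 ≤
            (4 / sInf ((fun θ : ℝ => (2 / π) * θ / (1 - Real.cos θ)) '' Set.Ioo 0 (2 * π))) * ε} :=
  consistent_obcs_gaussian_recovery_general hk1 hkn hxnorm hε hδ.1 hm
end
end

section
/- Let 1 ≤ k ≤ n be integers with d := k·(⌊lg(n/k)⌋ + 1) ≥ 2, and let 0 < ε ≤ 1/8 and 0 < δ ≤ 1/100. Then there exists a probability measure P on ℝ^n (with the Borel σ-algebra) such that for every integer m with m < (d − 1)/(32·ε) and every map A : (ℝ^n × {0,1})^m → Σ_k, there exists a k-sparse target x ∈ Σ_k for which the P^m-outer measure of the set of sample sequences (a_1, …, a_m) ∈ (ℝ^n)^m satisfying P( H(A((a_1, 1_{H(x)}(a_1)), …, (a_m, 1_{H(x)}(a_m)))) Δ H(x) ) > ε is greater than δ. -/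
open Real MeasureTheory
open scoped Classical

noncomputable section

/-- The half-space generated by `x`. -/
def halfSpace (n : ℕ) (x : Fin n → ℝ) : Set (Fin n → ℝ) :=
  {a | 0 ≤ ∑ i, a i * x i}

/-!
On a shattered set put mass `1 - 4ε` at one heavy point and spread the remaining `4ε` uniformly over
the others. A sample in which fewer than half as many draws are rare as there are rare points leaves
points of total mass more than `2ε` unseen, and by Markov's inequality small samples are of this
kind with large probability. Flipping the target on the unseen points changes nothing the learner
sees but moves the target by more than `2ε`, so on each such sample the learner fails on one of the
two targets; averaging over all targets yields a single one on which it fails often. The learner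
need not be measurable: averaging over measurable hulls bounds the outer measures.

For half-spaces of `k`-sparse vectors a shattered set of size `k * (⌊lg (n / k)⌋ + 1)` comes from
`k` disjoint blocks of coordinates, each indexed by all sign patterns of length `⌊lg (n / k)⌋`: one
nonzero coordinate per block selects a pattern, and its sign decides one further point.
-/

open ProbabilityTheory
open scoped Finset symmDiff ENNReal NNReal

section Averaging

variable {α κ : Type*} [MeasurableSpace α] {μ : Measure α}

theorem exists_measure_le_mul_measure_of_card_le {s : Finset κ} (hs : s.Nonempty) {B : κ → Set α}
    {G : Set α} {r : ℕ} (h : ∀ᵐ a ∂μ, a ∈ G → #s ≤ r * #{k ∈ s | a ∈ B k}) :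
    ∃ k ∈ s, μ G ≤ r * μ (B k) := by
  let N : α → ℝ≥0∞ := fun a ↦ ∑ k ∈ s, (toMeasurable μ (B k)).indicator 1 a
  have hNmeas : Measurable N := Finset.measurable_fun_sum _ fun k _ ↦
    measurable_one.indicator (measurableSet_toMeasurable μ (B k))
  have hcard (a : α) : (#{k ∈ s | a ∈ B k} : ℝ≥0∞) ≤ N a := by
    rw [Finset.card_filter, Nat.cast_sum]
    refine Finset.sum_le_sum fun k _ ↦ ?_
    by_cases hk : a ∈ B k
    · simp [hk, subset_toMeasurable μ (B k) hk]
    · simp [hk]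
  refine ENNReal.exists_le_of_sum_le hs ?_
  calc ∑ _k ∈ s, μ G = ∫⁻ _a in G, #s ∂μ := by
        rw [setLIntegral_const, Finset.sum_const, nsmul_eq_mul]
    _ ≤ ∫⁻ a in G, r * N a ∂μ := by
        refine setLIntegral_mono_ae (hNmeas.const_mul _).aemeasurable (h.mono fun a ha haG ↦ ?_)
        calc (#s : ℝ≥0∞) ≤ r * #{k ∈ s | a ∈ B k} := mod_cast ha haG
          _ ≤ r * N a := by gcongr; exact hcard a
    _ ≤ ∫⁻ a, r * N a ∂μ := setLIntegral_le_lintegral _ _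
    _ = ∑ k ∈ s, r * μ (B k) := by
        rw [lintegral_const_mul _ hNmeas, lintegral_finsetSum _ fun k _ ↦
          measurable_one.indicator (measurableSet_toMeasurable μ (B k)), Finset.mul_sum]
        simp only [lintegral_indicator_one (measurableSet_toMeasurable _ _), measure_toMeasurable]

end Averaging

theorem card_le_two_mul_card_filter_of_injOn {κ : Type*} {s : Finset κ} {p : κ → Prop} {φ : κ → κ}
    (hφ : Set.MapsTo φ s s) (hinj : Set.InjOn φ s) (h : ∀ k ∈ s, p k ∨ p (φ k)) :
    #s ≤ 2 * #{k ∈ s | p k} := by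
  have hle : #{k ∈ s | ¬p k} ≤ #{k ∈ s | p k} := by
    refine Finset.card_le_card_of_injOn φ (fun k hk ↦ ?_) (hinj.mono (Finset.filter_subset _ _))
    obtain ⟨hks, hpk⟩ := Finset.mem_filter.1 hk
    exact Finset.mem_filter.2 ⟨hφ hks, (h k hks).resolve_left hpk⟩
  have := Finset.card_filter_add_card_filter_not (s := s) p
  lia

theorem card_le_card_filter_notMem_range_add {ι X : Type*} [Fintype ι]
    (R : Finset X) (a : ι → X) :
    #R ≤ #{x ∈ R | x ∉ Set.range a} + #{i | a i ∈ R} := by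
  have hseen : #{x ∈ R | x ∈ Set.range a} ≤ #{i | a i ∈ R} := by
    refine Finset.card_le_card_of_surjOn a fun x hx ↦ ?_
    obtain ⟨hxR, i, rfl⟩ := Finset.mem_filter.1 hx
    exact ⟨i, by simpa using hxR, rfl⟩
  have := Finset.card_filter_add_card_filter_not (s := R) (· ∈ Set.range a)
  lia

theorem mul_pi_le_card_filter_mem {ι X : Type*} [Fintype ι] [MeasurableSpace X] (P : Measure X)
    [IsProbabilityMeasure P] {s : Set X} [DecidablePred (· ∈ s)] (hs : MeasurableSet s) (t : ℝ≥0∞) :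
    t * Measure.pi (fun _ : ι ↦ P) {a | t ≤ #{i | a i ∈ s}} ≤ Fintype.card ι * P s := by
  have hmeas (i : ι) : MeasurableSet {a : ι → X | a i ∈ s} := measurable_pi_apply i hs
  have hcount (a : ι → X) :
      (#{i | a i ∈ s} : ℝ≥0∞) = ∑ i, {a : ι → X | a i ∈ s}.indicator 1 a := by
    simp [Set.indicator_apply]
  simp only [hcount]
  refine (mul_meas_ge_le_lintegral (Finset.measurable_fun_sum _ fun i _ ↦
    measurable_one.indicator (hmeas i)) t).trans_eq ?_
  calc _ = ∑ i : ι, Measure.pi (fun _ : ι ↦ P) {a | a i ∈ s} := by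
        rw [lintegral_finsetSum _ fun i _ ↦ measurable_one.indicator (hmeas i)]
        simp only [lintegral_indicator_one (hmeas _)]
    _ = ∑ _i : ι, P s := Finset.sum_congr rfl fun i _ ↦
        (measurePreserving_eval (fun _ : ι ↦ P) i).measure_preimage hs.nullMeasurableSet
    _ = Fintype.card ι * P s := by simp

section Shattering

variable {ι X : Type*} {C : Set (Set X)} {f : ι → X}

/-- The concept class `C` shatters `T`: every subset of `T` is cut out by a concept. This is
`Finset.Shatters` for classes of possibly infinite sets. -/
def Shatters (C : Set (Set X)) (T : Set X) : Prop :=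
  ∀ ⦃S⦄, S ⊆ T → ∃ c ∈ C, T ∩ c = S

theorem shatters_range (h : ∀ S : Set ι, ∃ c ∈ C, f ⁻¹' c = S) : Shatters C (Set.range f) := by
  intro S hS
  obtain ⟨c, hcC, hc⟩ := h (f ⁻¹' S)
  refine ⟨c, hcC, ?_⟩
  rw [Set.inter_comm, ← Set.image_preimage_eq_inter_range, hc, Set.image_preimage_eq_of_subset hS]

theorem injective_of_forall_exists_preimage_eq (h : ∀ S : Set ι, ∃ c ∈ C, f ⁻¹' c = S) :
    Function.Injective f := by
  intro i j hij
  obtain ⟨c, -, hc⟩ := h {j}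
  have hj : f j ∈ c := by rw [← Set.mem_preimage, hc]; rfl
  have hi : i ∈ f ⁻¹' c := by rwa [Set.mem_preimage, hij]
  rwa [hc] at hi

end Shattering

section Learning

variable {ι X : Type*}

/-- The sample points `a`, each paired with its membership label in the concept `c`. -/
def labeledSample (c : Set X) (a : ι → X) : ι → X × Bool :=
  fun i ↦ (a i, decide (a i ∈ c))

theorem labeledSample_congr {c c' : Set X} {a : ι → X} (h : ∀ i, a i ∈ c ↔ a i ∈ c') :
    labeledSample c a = labeledSample c' a := by
  funext i
  simp only [labeledSample, h i]

variable [MeasurableSpace X] {P : Measure X} {ε : ℝ} {C : Set (Set X)} {T : Finset X}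

/-- The samples on which the learner `A` misses the target concept `c` by more than `ε`. The
hypotheses `A` may output are arbitrary sets, so the error is in general an outer measure. -/
def failureSet (P : Measure X) (ε : ℝ) (A : (ι → X × Bool) → Set X) (c : Set X) : Set (ι → X) :=
  {a | ε < P.real (A (labeledSample c a) ∆ c)}

theorem mem_failureSet_or_mem_failureSet [IsFiniteMeasure P] {A : (ι → X × Bool) → Set X}
    {c c' : Set X} {a : ι → X} (hagree : ∀ i, a i ∈ c ↔ a i ∈ c')
    (hfar : 2 * ε < P.real (c ∆ c')) :
    a ∈ failureSet P ε A c ∨ a ∈ failureSet P ε A c' := by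
  have htri : P.real (c ∆ c') ≤ P.real (A (labeledSample c a) ∆ c)
      + P.real (A (labeledSample c a) ∆ c') := by
    rw [symmDiff_comm _ c]
    exact (measureReal_mono (symmDiff_triangle c _ c')).trans (measureReal_union_le _ _)
  simp only [failureSet, Set.mem_ofPred_eq, ← labeledSample_congr hagree]
  by_contra! hsmall
  linarith [hsmall.1, hsmall.2]

-- The targets `S` and `S ∆ U`, `U` the set of unseen points, give the learner the same data.
theorem card_powerset_le_two_mul_card_filter_mem_failureSet [IsFiniteMeasure P]
    (A : (ι → X × Bool) → Set X) {c : Finset X → Set X} (hc : ∀ S ⊆ T, (T : Set X) ∩ c S = S)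
    {a : ι → X} (ha : ∀ i, a i ∈ T) (hunseen : 2 * ε < P.real (T \ Set.range a)) :
    #T.powerset ≤ 2 * #{S ∈ T.powerset | a ∈ failureSet P ε A (c S)} := by
  let U : Finset X := {x ∈ T | x ∉ Set.range a}
  have hUT : U ⊆ T := Finset.filter_subset _ _
  have hflip {S : Finset X} (hS : S ⊆ T) : S ∆ U ⊆ T :=
    symmDiff_le (hS.trans le_sup_right) (hUT.trans le_sup_right)
  have hmem {S : Finset X} (hS : S ⊆ T) {x : X} (hx : x ∈ T) : x ∈ c S ↔ x ∈ S := by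
    simpa [hx] using Set.ext_iff.1 (hc S hS) x
  refine card_le_two_mul_card_filter_of_injOn (φ := (· ∆ U))
    (fun S hS ↦ Finset.mem_powerset.2 (hflip (Finset.mem_powerset.1 hS)))
    (symmDiff_left_injective U).injOn fun S hS ↦ ?_
  rw [Finset.mem_powerset] at hS
  refine mem_failureSet_or_mem_failureSet (fun i ↦ ?_) (hunseen.trans_le (measureReal_mono ?_))
  · have hiU : a i ∉ U := by simp [U]
    rw [hmem hS (ha i), hmem (hflip hS) (ha i), Finset.mem_symmDiff]
    tauto
  · rintro x ⟨hxT, hxa⟩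
    have hxU : x ∈ U := Finset.mem_filter.2 ⟨hxT, hxa⟩
    simp only [Set.mem_symmDiff, hmem hS hxT, hmem (hflip hS) hxT, Finset.mem_symmDiff, hxU]
    tauto

theorem Shatters.exists_pi_unseen_le_two_mul_pi_failureSet [Fintype ι] [IsProbabilityMeasure P]
    (hT : Shatters C T) (hPT : ∀ᵐ x ∂P, x ∈ T) (A : (ι → X × Bool) → Set X) :
    ∃ c ∈ C, Measure.pi (fun _ : ι ↦ P) {a | 2 * ε < P.real (T \ Set.range a)}
      ≤ 2 * Measure.pi (fun _ : ι ↦ P) (failureSet P ε A c) := by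
  choose! c hcC hc using show ∀ S ⊆ (T : Set X), ∃ c ∈ C, (T : Set X) ∩ c = S from hT
  have hsample : ∀ᵐ a ∂Measure.pi (fun _ : ι ↦ P), ∀ i, a i ∈ T :=
    ae_all_iff.2 fun _ ↦ Measure.tendsto_eval_ae_ae.eventually hPT
  obtain ⟨S, hS, hle⟩ := exists_measure_le_mul_measure_of_card_le (r := 2)
    (B := fun S : Finset X ↦ failureSet P ε A (c S)) T.powerset_nonempty
    (hsample.mono fun a ha hunseen ↦ card_powerset_le_two_mul_card_filter_mem_failureSet
      (c := fun S ↦ c S) A (fun S hS ↦ hc S (Finset.coe_subset.2 hS)) ha hunseen)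
  exact ⟨c S, hcC S (Finset.coe_subset.2 (Finset.mem_powerset.1 hS)), mod_cast hle⟩

end Learning

section HeavyPoint

variable {ι X : Type*} [MeasurableSpace X] {b : X} {R : Finset X} {p : ℝ}

/-- The hard distribution: mass `1 - p` at the point `b`, and mass `p` spread uniformly over the
rare points `R`. -/
def heavyPointMeasure (b : X) (R : Finset X) (p : ℝ) : Measure X :=
  (1 - p).toNNReal • Measure.dirac b + p.toNNReal • uniformOn (R : Set X)

variable [MeasurableSingletonClass X]

theorem isProbabilityMeasure_heavyPointMeasure (b : X) (hR : R.Nonempty) (hp : 0 ≤ p)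
    (hp1 : p ≤ 1) : IsProbabilityMeasure (heavyPointMeasure b R p) := by
  have := isProbabilityMeasure_uniformOn R.finite_toSet (Finset.coe_nonempty.2 hR)
  constructor
  have htotal : (1 - p).toNNReal + p.toNNReal = 1 := by
    rw [← Real.toNNReal_add (sub_nonneg.2 hp1) hp, sub_add_cancel, Real.toNNReal_one]
  simpa [heavyPointMeasure] using congrArg ((↑) : ℝ≥0 → ℝ≥0∞) htotal

theorem heavyPointMeasure_rare_le (hb : b ∉ R) : heavyPointMeasure b R p R ≤ ENNReal.ofReal p := by
  have : uniformOn (R : Set X) R ≤ 1 := prob_le_one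
  simpa [heavyPointMeasure, hb, ENNReal.ofReal] using mul_le_mul_right this (ENNReal.ofReal p)

theorem ae_heavyPointMeasure_mem_insert : ∀ᵐ x ∂heavyPointMeasure b R p, x ∈ insert b R := by
  have hR : uniformOn (R : Set X) {x | x ∉ insert b R} = 0 := by
    rw [uniformOn_eq_zero_iff R.finite_toSet, ← Set.disjoint_iff_inter_eq_empty,
      Set.disjoint_left]
    intro x hxR hx
    exact hx (Finset.mem_insert_of_mem hxR)
  simp only [ae_iff, heavyPointMeasure, Measure.coe_add, Pi.add_apply, Measure.smul_apply, hR]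
  simp

theorem uniformOn_real_finset {U : Finset X} (hU : U ⊆ R) :
    (uniformOn (R : Set X)).real U = #U / #R := by
  have hRU : (R : Set X) ∩ U = U := Set.inter_eq_right.2 (Finset.coe_subset.2 hU)
  rw [measureReal_def, uniformOn, cond_apply R.measurableSet, hRU, Measure.count_apply_finset,
    Measure.count_apply_finset]
  simp [div_eq_inv_mul]

theorem mul_card_div_card_le_heavyPointMeasure_real (hp : 0 ≤ p) {U : Finset X} (hU : U ⊆ R) :
    p * (#U / #R) ≤ (heavyPointMeasure b R p).real U := by
  rw [heavyPointMeasure, measureReal_add_apply, measureReal_nnreal_smul_apply,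
    measureReal_nnreal_smul_apply, uniformOn_real_finset hU, Real.coe_toNNReal p hp]
  exact le_add_of_nonneg_left (by positivity)

theorem half_lt_heavyPointMeasure_real_unseen [Fintype ι] (hp : 0 < p) {a : ι → X}
    (h : 2 * #{i | a i ∈ R} < #R) :
    p / 2 < (heavyPointMeasure b R p).real (R \ Set.range a) := by
  have hcoe : (R \ Set.range a : Set X) = ({x ∈ R | x ∉ Set.range a} : Finset X) := by ext; simp
  have hR : (0 : ℝ) < #R := by exact_mod_cast (Nat.zero_le _).trans_lt h
  have hunseen : #R < 2 * #{x ∈ R | x ∉ Set.range a} := by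
    have := card_le_card_filter_notMem_range_add R a
    lia
  rw [hcoe]
  refine lt_of_lt_of_le ?_
    (mul_card_div_card_le_heavyPointMeasure_real hp.le (Finset.filter_subset _ _))
  have hhalf : (1 / 2 : ℝ) < #{x ∈ R | x ∉ Set.range a} / #R := by
    rw [div_lt_div_iff₀ two_pos hR, mul_comm _ (2 : ℝ), one_mul]
    exact_mod_cast hunseen
  simpa only [mul_one_div] using mul_lt_mul_of_pos_left hhalf hp

theorem pi_heavyPointMeasure_card_le_two_mul_card_le (ι : Type*) [Fintype ι] (hb : b ∉ R)
    (hR : R.Nonempty) (hp : 0 ≤ p) (hp1 : p ≤ 1) :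
    Measure.pi (fun _ : ι ↦ heavyPointMeasure b R p) {a | #R ≤ 2 * #{i | a i ∈ R}} ≤
      ENNReal.ofReal (2 * p * Fintype.card ι / #R) := by
  have := isProbabilityMeasure_heavyPointMeasure b hR hp hp1
  have hcard : (0 : ℝ) < #R / 2 := half_pos (by exact_mod_cast hR.card_pos)
  have hsub : {a : ι → X | #R ≤ 2 * #{i | a i ∈ R}} ⊆
      {a | ENNReal.ofReal (#R / 2) ≤ #{i | a i ∈ (R : Set X)}} := by
    intro a ha
    have hcast : (#R : ℝ) ≤ 2 * #{i | a i ∈ R} := by exact_mod_cast ha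
    simp only [Set.mem_ofPred_eq, Finset.mem_coe]
    rw [← ENNReal.ofReal_natCast]
    exact ENNReal.ofReal_le_ofReal (by linarith)
  have hmarkov := (mul_pi_le_card_filter_mem (ι := ι) (heavyPointMeasure b R p) R.measurableSet
    (ENNReal.ofReal (#R / 2))).trans (mul_le_mul_right (heavyPointMeasure_rare_le hb) _)
  rw [← ENNReal.ofReal_natCast (Fintype.card ι), ← ENNReal.ofReal_mul (Nat.cast_nonneg _),
    mul_comm, ← ENNReal.le_div_iff_mul_le (by simp [hcard]) (by simp),
    ← ENNReal.ofReal_div_of_pos hcard] at hmarkov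
  have hbound : Fintype.card ι * p / (#R / 2) = 2 * p * Fintype.card ι / #R := by
    rw [div_div_eq_mul_div]; ring
  exact hbound ▸ (measure_mono hsub).trans hmarkov

theorem le_pi_heavyPointMeasure_unseen (ι : Type*) [Fintype ι] (hb : b ∉ R) (hR : R.Nonempty)
    (hp : 0 < p) (hp1 : p ≤ 1) :
    ENNReal.ofReal (1 - 2 * p * Fintype.card ι / #R) ≤
      Measure.pi (fun _ : ι ↦ heavyPointMeasure b R p)
        {a | p / 2 < (heavyPointMeasure b R p).real (insert b R \ Set.range a)} := by
  have := isProbabilityMeasure_heavyPointMeasure b hR hp.le hp1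
  set μ := Measure.pi fun _ : ι ↦ heavyPointMeasure b R p
  set G := {a : ι → X | p / 2 < (heavyPointMeasure b R p).real (insert b R \ Set.range a)}
  let manyRare : Set (ι → X) := {a | #R ≤ 2 * #{i | a i ∈ R}}
  have hcover (a : ι → X) (ha : a ∉ manyRare) : a ∈ G :=
    (half_lt_heavyPointMeasure_real_unseen hp (not_le.1 ha)).trans_le
      (measureReal_mono (Set.sdiff_subset_sdiff_left (Set.subset_insert b R)))
  rw [ENNReal.ofReal_sub _ (by positivity), ENNReal.ofReal_one, tsub_le_iff_right]
  calc (1 : ℝ≥0∞) = μ Set.univ := measure_univ.symm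
    _ ≤ μ (G ∪ manyRare) := measure_mono fun a _ ↦ or_iff_not_imp_right.2 (hcover a)
    _ ≤ μ G + μ manyRare := measure_union_le _ _
    _ ≤ μ G + ENNReal.ofReal (2 * p * Fintype.card ι / #R) := by
        gcongr
        exact pi_heavyPointMeasure_card_le_two_mul_card_le ι hb hR hp.le hp1

end HeavyPoint

section SampleComplexity

variable {X : Type*} [MeasurableSpace X] [MeasurableSingletonClass X] {C : Set (Set X)}
  {T : Finset X} {ε : ℝ}

theorem Shatters.exists_measure_forall_lt_pi_failureSet (hT : Shatters C T) (hcard : 2 ≤ #T)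
    (hε : 0 < ε) (hε' : ε ≤ 1 / 4) :
    ∃ P : Measure X, IsProbabilityMeasure P ∧
      ∀ δ : ℝ, 0 ≤ δ → ∀ m : ℕ, m < (1 - 2 * δ) * (#T - 1) / (8 * ε) →
        ∀ A : (Fin m → X × Bool) → Set X, ∃ c ∈ C,
          ENNReal.ofReal δ < Measure.pi (fun _ : Fin m ↦ P) (failureSet P ε A c) := by
  obtain ⟨b, hbT⟩ : T.Nonempty := Finset.card_pos.1 (by lia)
  have hTR : insert b (T.erase b) = T := Finset.insert_erase hbT
  have hRcard : #(T.erase b) = (#T - 1 : ℝ) := by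
    rw [Finset.card_erase_of_mem hbT, Nat.cast_pred (by lia)]
  have hR : (T.erase b).Nonempty := Finset.card_pos.1 (by rw [Finset.card_erase_of_mem hbT]; lia)
  have hD : (0 : ℝ) < #T - 1 := by rw [← hRcard]; exact_mod_cast hR.card_pos
  have hp : 4 * ε ≤ 1 := by linarith
  let P := heavyPointMeasure b (T.erase b) (4 * ε)
  have hP : IsProbabilityMeasure P := isProbabilityMeasure_heavyPointMeasure b hR (by positivity) hp
  have hPT : ∀ᵐ x ∂P, x ∈ T := hTR ▸ ae_heavyPointMeasure_mem_insert
  refine ⟨P, hP, fun δ hδ m hm A ↦ ?_⟩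
  obtain ⟨c, hcC, hc⟩ := hT.exists_pi_unseen_le_two_mul_pi_failureSet (ε := ε) hPT A
  refine ⟨c, hcC, ?_⟩
  have hunseen := le_pi_heavyPointMeasure_unseen (Fin m) (T.notMem_erase b) hR
    (show 0 < 4 * ε by positivity) hp
  rw [show 4 * ε / 2 = 2 * ε by ring, ← Finset.coe_insert, hTR, hRcard, Fintype.card_fin] at hunseen
  have hδm : 2 * δ < 1 - 2 * (4 * ε) * m / (#T - 1) := by
    rw [lt_div_iff₀ (by positivity)] at hm
    rw [lt_sub_comm, div_lt_iff₀ hD]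
    linarith
  have hdouble : 2 * ENNReal.ofReal δ < 2 * Measure.pi (fun _ : Fin m ↦ P) (failureSet P ε A c) :=
    calc 2 * ENNReal.ofReal δ = ENNReal.ofReal (2 * δ) := by
          rw [ENNReal.ofReal_mul zero_le_two, ENNReal.ofReal_ofNat]
      _ < ENNReal.ofReal (1 - 2 * (4 * ε) * m / (#T - 1)) :=
          (ENNReal.ofReal_lt_ofReal_iff_of_nonneg (by positivity)).2 hδm
      _ ≤ _ := hunseen.trans hc
  exact lt_of_mul_lt_mul_left' hdouble

end SampleComplexity

theorem sum_extend_mul_extend {ι κ R : Type*} [Fintype ι] [Fintype κ] [NonUnitalNonAssocSemiring R]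
    (e : ι ↪ κ) (u v : ι → R) :
    ∑ i, Function.extend e u 0 i * Function.extend e v 0 i = ∑ q, u q * v q := by
  refine (Fintype.sum_of_injective e e.injective _ _ (fun i hi ↦ ?_) fun q ↦ ?_).symm
  · rw [Function.extend_apply' _ _ _ hi, Pi.zero_apply, zero_mul]
  · rw [e.injective.extend_apply, e.injective.extend_apply]

section HalfSpaces

variable {n k L : ℕ} (e : Fin k × (Fin L → Bool) ↪ Fin n)

/-- The bit `true` as `1` and `false` as `-1`. -/
def signedBit (b : Bool) : ℝ := if b then 1 else -1

theorem signedBit_mul_signedBit_nonneg_iff (b c : Bool) :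
    0 ≤ signedBit b * signedBit c ↔ b = c := by
  cases b <;> cases c <;> norm_num [signedBit]

/-- The shattered points. The embedding `e` cuts out `k` blocks of `2 ^ L` coordinates, those of a
block being indexed by the words `w : Fin L → Bool`; the point `(B, some l)` is supported on block
`B` and reads off the bit `w l` there, and `(B, none)` is constantly `1` on it. -/
def blockPoint (j : Fin k × Option (Fin L)) : Fin n → ℝ :=
  Function.extend e (fun q ↦ if q.1 = j.1 then signedBit (j.2.elim true q.2) else 0) 0

/-- The word of block `B` that encodes which of the points `(B, some l)` belong to `S` together
with, or apart from, `(B, none)`. -/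
def blockWord (S : Set (Fin k × Option (Fin L))) (B : Fin k) : Fin L → Bool :=
  fun l ↦ decide ((B, some l) ∈ S ↔ (B, none) ∈ S)

/-- The sparse vector whose half-space cuts `S` out of the shattered points: in each block it has
one nonzero coordinate, at the word `blockWord S B`. -/
def blockTarget (S : Set (Fin k × Option (Fin L))) : Fin n → ℝ :=
  Function.extend e
    (fun q ↦ if q.2 = blockWord S q.1 then signedBit (decide ((q.1, none) ∈ S)) else 0) 0

theorem sparse_blockTarget (S : Set (Fin k × Option (Fin L))) :
    sparse n k (blockTarget e S) := by
  refine ⟨Finset.univ.image fun B ↦ e (B, blockWord S B),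
    Finset.card_image_le.trans (Finset.card_fin k).le, fun i hi ↦ ?_⟩
  by_cases hie : ∃ q, e q = i
  · obtain ⟨⟨B, w⟩, rfl⟩ := hie
    have hw : w ≠ blockWord S B := by
      rintro rfl
      exact hi (Finset.mem_image_of_mem _ (Finset.mem_univ B))
    rw [blockTarget, e.injective.extend_apply, if_neg hw]
  · rw [blockTarget, Function.extend_apply' _ _ _ hie, Pi.zero_apply]

theorem sum_blockPoint_mul_blockTarget (j : Fin k × Option (Fin L))
    (S : Set (Fin k × Option (Fin L))) :
    ∑ i, blockPoint e j i * blockTarget e S i =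
      signedBit (j.2.elim true (blockWord S j.1)) * signedBit (decide ((j.1, none) ∈ S)) := by
  simp only [blockPoint, blockTarget, sum_extend_mul_extend, Fintype.sum_prod_type, mul_ite,
    mul_zero, Finset.sum_ite_eq', Finset.mem_univ, if_true, ite_mul, zero_mul]

theorem blockPoint_mem_halfSpace_blockTarget_iff (j : Fin k × Option (Fin L))
    (S : Set (Fin k × Option (Fin L))) :
    blockPoint e j ∈ halfSpace n (blockTarget e S) ↔ j ∈ S := by
  rw [halfSpace, Set.mem_ofPred_eq, sum_blockPoint_mul_blockTarget,
    signedBit_mul_signedBit_nonneg_iff]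
  obtain ⟨B, _ | l⟩ := j
  · simp
  · by_cases hB : (B, none) ∈ S <;> simp [blockWord, hB]

theorem exists_finset_card_eq_shatters_halfSpace_sparse (h : k * 2 ^ L ≤ n) :
    ∃ T : Finset (Fin n → ℝ),
      #T = k * (L + 1) ∧ Shatters (halfSpace n '' {x | sparse n k x}) T := by
  obtain ⟨e⟩ : Nonempty (Fin k × (Fin L → Bool) ↪ Fin n) :=
    Function.Embedding.nonempty_of_card_le (by simpa using h)
  have hpre (S : Set (Fin k × Option (Fin L))) :
      ∃ c ∈ halfSpace n '' {x | sparse n k x}, blockPoint e ⁻¹' c = S :=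
    ⟨_, ⟨_, sparse_blockTarget e S, rfl⟩,
      Set.ext fun j ↦ blockPoint_mem_halfSpace_blockTarget_iff e j S⟩
  refine ⟨Finset.univ.image (blockPoint e), ?_, ?_⟩
  · rw [Finset.card_image_of_injective _ (injective_of_forall_exists_preimage_eq hpre)]
    simp
  · simpa using shatters_range hpre

end HalfSpaces

theorem mul_two_pow_floor_logb_div_le {n k : ℕ} (hkn : k ≤ n) :
    k * 2 ^ ⌊logb 2 ((n : ℝ) / k)⌋₊ ≤ n := by
  obtain rfl | hk := k.eq_zero_or_pos
  · simp
  have hk' : (0 : ℝ) < k := by exact_mod_cast hk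
  have hnk : (1 : ℝ) ≤ n / k := by
    rw [one_le_div hk']
    exact_mod_cast hkn
  have hfloor := Nat.floor_le (logb_nonneg one_lt_two hnk)
  rw [le_logb_iff_rpow_le one_lt_two (by positivity), rpow_natCast, le_div_iff₀' hk'] at hfloor
  exact_mod_cast hfloor

theorem failureSet_halfSpace {ι : Type*} {n : ℕ} (P : Measure (Fin n → ℝ)) (ε : ℝ)
    (A : (ι → (Fin n → ℝ) × Bool) → Set (Fin n → ℝ)) (x : Fin n → ℝ) :
    failureSet P ε A (halfSpace n x) =
      {a | ε < (P (symmDiff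
        (A fun i ↦ (a i, if 0 ≤ ∑ j, a i j * x j then true else false))
        (halfSpace n x))).toReal} := by
  have hlabel (a : ι → Fin n → ℝ) : labeledSample (halfSpace n x) a =
      fun i ↦ (a i, if 0 ≤ ∑ j, a i j * x j then true else false) := by
    funext i
    by_cases h : 0 ≤ ∑ j, a i j * x j <;> simp [labeledSample, halfSpace, h]
  simp only [failureSet, hlabel, measureReal_def]

theorem obcs_sample_complexity_lower_bound_general (n k : ℕ) (hkn : k ≤ n)
    (hd : 2 ≤ k * (Nat.floor (logb 2 ((n : ℝ) / (k : ℝ))) + 1))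
    (ε : ℝ) (hε : 0 < ε) (hε' : ε ≤ 1 / 4) :
    ∃ P : Measure (Fin n → ℝ), IsProbabilityMeasure P ∧
      ∀ δ : ℝ, 0 ≤ δ → ∀ m : ℕ,
        (m : ℝ) < (1 - 2 * δ) *
          (((k * (Nat.floor (logb 2 ((n : ℝ) / (k : ℝ))) + 1) : ℕ) : ℝ) - 1) / (8 * ε) →
        ∀ A : (Fin m → (Fin n → ℝ) × Bool) → Set (Fin n → ℝ),
          ∃ x : Fin n → ℝ, sparse n k x ∧
            ENNReal.ofReal δ <
              (Measure.pi fun _ : Fin m => P)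
                {a : Fin m → Fin n → ℝ |
                  ε < (P (symmDiff
                        (A fun i =>
                          (a i, if 0 ≤ ∑ j, a i j * x j then true else false))
                        (halfSpace n x))).toReal} := by
  obtain ⟨T, hTcard, hT⟩ :=
    exists_finset_card_eq_shatters_halfSpace_sparse (mul_two_pow_floor_logb_div_le hkn)
  rw [← hTcard] at hd ⊢
  obtain ⟨P, hP, hfail⟩ := hT.exists_measure_forall_lt_pi_failureSet hd hε hε'
  refine ⟨P, hP, fun δ hδ m hm A ↦ ?_⟩
  obtain ⟨_, ⟨x, hx, rfl⟩, hlt⟩ := hfail δ hδ m hm A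
  exact ⟨x, hx, failureSet_halfSpace P ε A x ▸ hlt⟩

theorem obcs_sample_complexity_lower_bound (n k : ℕ) (hk1 : 1 ≤ k) (hkn : k ≤ n)
    (hd : 2 ≤ k * (Nat.floor (logb 2 ((n : ℝ) / (k : ℝ))) + 1))
    (ε δ : ℝ) (hε : 0 < ε) (hε' : ε ≤ 1 / 8) (hδ : 0 < δ) (hδ' : δ ≤ 1 / 100) :
    ∃ P : Measure (Fin n → ℝ), IsProbabilityMeasure P ∧
      ∀ m : ℕ,
        (m : ℝ) < (((k * (Nat.floor (logb 2 ((n : ℝ) / (k : ℝ))) + 1) : ℕ) : ℝ) - 1) / (32 * ε) →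
        ∀ A : (Fin m → (Fin n → ℝ) × Bool) → (Fin n → ℝ),
          (∀ s, sparse n k (A s)) →
          ∃ x : Fin n → ℝ, sparse n k x ∧
            ENNReal.ofReal δ <
              (Measure.pi fun _ : Fin m => P)
                {a : Fin m → Fin n → ℝ |
                  ε < (P (symmDiff
                        (halfSpace n (A fun i =>
                          (a i, if 0 ≤ ∑ j, a i j * x j then true else false)))
                        (halfSpace n x))).toReal} := by
  obtain ⟨P, hP, hfail⟩ := obcs_sample_complexity_lower_bound_general n k hkn hd ε hε (by linarith)
  refine ⟨P, hP, fun m hm A _ ↦ hfail δ hδ.le m (hm.trans_le ?_) fun s ↦ halfSpace n (A s)⟩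
  rw [div_le_div_iff₀ (by positivity) (by positivity)]
  have hD : (0 : ℝ) ≤ ((k * (⌊logb 2 ((n : ℝ) / k)⌋₊ + 1) : ℕ) : ℝ) - 1 := by
    rw [sub_nonneg]; exact_mod_cast (by lia)
  nlinarith [mul_nonneg hD hε.le]
end
end
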